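/- arXiv:1709.07998 — 4 statements merged into one kernel-verified Lean document; each statement's English description precedes it below -/
import Mathlib

section
/- If X is a weakly countably tight Lindelöf Hausdorff space with countable pseudocharacter, then |X| ≤ 𝔠 (the cardinality of the continuum). -/
open Cardinal Set TopologicalSpace

universe u

/-- The tightness `t(X)`: the least infinite cardinal `κ` such that whenever
`x ∈ closure A` there is `B ⊆ A` with `#B ≤ κ` and `x ∈ closure B`. -/
noncomputable def tightness (X : Type u) [TopologicalSpace X] : Cardinal.{u} :=
  sInf {κ : Cardinal.{u} | ℵ₀ ≤ κ ∧ ∀ (A : Set X) (x : X), x ∈ closure A →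
    ∃ B ⊆ A, #B ≤ κ ∧ x ∈ closure B}

/-- The `κ`-closure of a set `A`. -/
noncomputable def clk {X : Type u} [TopologicalSpace X] (κ : Cardinal.{u}) (A : Set X) : Set X :=
  ⋃ (B : Set X) (_ : B ⊆ A ∧ #B ≤ κ), closure B

/-- A cover `𝒞` witnessing that `wt X ≤ κ`. -/
noncomputable def IsWtWitness {X : Type u} [TopologicalSpace X] (κ : Cardinal.{u}) (𝒞 : Set (Set X)) : Prop :=
  ⋃₀ 𝒞 = Set.univ ∧ #𝒞 ≤ 2 ^ κ ∧ ∀ C ∈ 𝒞, tightness ↥C ≤ κ ∧ clk (2 ^ κ) C = Set.univ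

/-- The weak tightness `wt(X)`. -/
noncomputable def wt (X : Type u) [TopologicalSpace X] : Cardinal.{u} :=
  sInf {κ : Cardinal.{u} | ℵ₀ ≤ κ ∧ ∃ 𝒞 : Set (Set X), IsWtWitness κ 𝒞}

/-- The Lindelöf number `L(X)`. -/
noncomputable def LindelofNumber (X : Type u) [TopologicalSpace X] : Cardinal.{u} :=
  sInf {κ : Cardinal.{u} | ℵ₀ ≤ κ ∧ ∀ 𝒰 : Set (Set X), (∀ U ∈ 𝒰, IsOpen U) →
    ⋃₀ 𝒰 = Set.univ → ∃ 𝒱 ⊆ 𝒰, #𝒱 ≤ κ ∧ ⋃₀ 𝒱 = Set.univ}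

/-- The pseudocharacter `ψ(X)`. -/
noncomputable def psi (X : Type u) [TopologicalSpace X] : Cardinal.{u} :=
  sInf {κ : Cardinal.{u} | ℵ₀ ≤ κ ∧ ∀ x : X, ∃ 𝒰 : Set (Set X),
    #𝒰 ≤ κ ∧ (∀ U ∈ 𝒰, IsOpen U ∧ x ∈ U) ∧ ⋂₀ 𝒰 = {x}}

/-- The closed pseudocharacter `ψ_c(X)`. -/
noncomputable def psic (X : Type u) [TopologicalSpace X] : Cardinal.{u} :=
  sInf {κ : Cardinal.{u} | ℵ₀ ≤ κ ∧ ∀ x : X, ∃ 𝒰 : Set (Set X),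
    #𝒰 ≤ κ ∧ (∀ U ∈ 𝒰, IsOpen U ∧ x ∈ U) ∧ (⋂ U ∈ 𝒰, closure U) = {x}}

/-- `A` is `𝒞`-saturated: `A ∩ C` is dense in `A` for every `C ∈ 𝒞`. -/
noncomputable def Saturated {X : Type u} [TopologicalSpace X] (𝒞 : Set (Set X)) (A : Set X) : Prop :=
  ∀ C ∈ 𝒞, A ⊆ closure (A ∩ C)

/-- The π-character `πχ(x, X)` of a point: least cardinality of a local π-base at `x`. -/
noncomputable def piCharPt {X : Type u} [TopologicalSpace X] (x : X) : Cardinal.{u} :=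
  sInf {κ : Cardinal.{u} | ∃ ℬ : Set (Set X), #ℬ ≤ κ ∧
    (∀ B ∈ ℬ, IsOpen B ∧ B.Nonempty) ∧ ∀ U : Set X, IsOpen U → x ∈ U → ∃ B ∈ ℬ, B ⊆ U}

/-- The π-character `πχ(X)`. -/
noncomputable def piChar (X : Type u) [TopologicalSpace X] : Cardinal.{u} :=
  ⨆ x : X, piCharPt x

/-- The character `χ(x, X)` of a point: least cardinality of a local base at `x`. -/
noncomputable def charPt {X : Type u} [TopologicalSpace X] (x : X) : Cardinal.{u} :=
  sInf {κ : Cardinal.{u} | ∃ ℬ : Set (Set X), #ℬ ≤ κ ∧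
    (∀ B ∈ ℬ, IsOpen B ∧ x ∈ B) ∧ ∀ U : Set X, IsOpen U → x ∈ U → ∃ B ∈ ℬ, B ⊆ U}

/-- The character `χ(X)`. -/
noncomputable def character (X : Type u) [TopologicalSpace X] : Cardinal.{u} :=
  ⨆ x : X, charPt x

/-- The density `d(X)`: least cardinality of a dense subset. -/
noncomputable def density (X : Type u) [TopologicalSpace X] : Cardinal.{u} :=
  sInf {κ : Cardinal.{u} | ∃ D : Set X, Dense D ∧ #D ≤ κ}

/-- A space is homogeneous if its homeomorphism group acts transitively. -/
noncomputable def Homogeneous (X : Type u) [TopologicalSpace X] : Prop :=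
  ∀ x y : X, ∃ h : X ≃ₜ X, h x = y

/-- A space is power homogeneous if some (nonempty) power of it is homogeneous. -/
noncomputable def PowerHomogeneous (X : Type u) [TopologicalSpace X] : Prop :=
  ∃ I : Type u, Nonempty I ∧ Homogeneous (I → X)

/-- A `G^c_κ`-set: `G = ⋂𝒰 = ⋂_{U ∈ 𝒰} closure U` for a family `𝒰` of `≤ κ` open sets. -/
noncomputable def GcSet {X : Type u} [TopologicalSpace X] (κ : Cardinal.{u}) (G : Set X) : Prop :=
  ∃ 𝒰 : Set (Set X), #𝒰 ≤ κ ∧ (∀ U ∈ 𝒰, IsOpen U) ∧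
    G = ⋂₀ 𝒰 ∧ G = ⋂ U ∈ 𝒰, closure U

/-- A subset is subseparable if it is contained in the closure of a countable set. -/
noncomputable def Subseparable {X : Type u} [TopologicalSpace X] (A : Set X) : Prop :=
  ∃ c : Set X, c.Countable ∧ A ⊆ closure c

/-! This is a Pol–Šapirovskiĭ closing-off argument. Let `κ` bound `L(X)`, `ψ(X)` and `wt(X)`, and
let `𝒞` be a cover witnessing the last bound. Closing off yields a set `H` with `#H ≤ 2 ^ κ` such
that
* `H` is `𝒞`-saturated;
* a point `x` lies in `H` if `{x}` is the intersection of the closures of at most `κ` subsets of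
  `H`, each of cardinality at most `κ`;
* if at most `κ` members of fixed pseudobases at points of `H` do not cover `X`, then they miss a
  point of `H`.

Since `ψ_c(X) ≤ L(X) ψ(X)` in a Hausdorff space, saturation and the tightness of the members of `𝒞`
show that the second property applies to all points of the closure of `H`, so `H` is closed. If
there were a point `p ∉ H`, then `H`, being closed, would be covered by at most `κ` pseudobase
members avoiding `p`, against the third property. -/

section CardinalArithmetic

variable {X ι : Type u} {κ μ : Cardinal.{u}}

theorem mk_biUnion_le_of_forall_mk_le (hκ : ℵ₀ ≤ κ) {s : Set ι} {A : ι → Set X} (hs : #s ≤ κ)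
    (hA : ∀ i ∈ s, #(A i) ≤ κ) : #(⋃ i ∈ s, A i : Set X) ≤ κ :=
  (mk_biUnion_le A s).trans (mul_le_of_le hκ hs (ciSup_le' fun i => hA i i.2))

theorem exists_subset_range_of_mk_le {T : Type u} [Nonempty X] {A : Set X} (hA : #A ≤ #T) :
    ∃ e : T → X, A ⊆ range e := by
  obtain ⟨g⟩ := Cardinal.le_def _ _ |>.1 hA
  exact ⟨Function.extend g (↑) fun _ => Classical.arbitrary X,
    fun x hx => ⟨g ⟨x, hx⟩, g.injective.extend_apply ..⟩⟩

theorem exists_mk_le_closed_under (hμ : ℵ₀ ≤ μ) (hμκ : μ ^ κ ≤ μ)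
    (F : Set X → Set X) (hF : ∀ S : Set X, #S ≤ κ → #(F S) ≤ μ) :
    ∃ H : Set X, #H ≤ μ ∧ ∀ S ⊆ H, #S ≤ κ → F S ⊆ H := by
  obtain _ | _ := isEmpty_or_nonempty X
  · exact ⟨∅, by simp, fun S _ _ x => isEmptyElim x⟩
  have hμ₀ : μ ≠ 0 := (aleph0_pos.trans_le hμ).ne'
  have henum (S : Set X) : ∃ e : μ.out → X, #S ≤ κ → F S ⊆ range e := by
    by_cases hS : #S ≤ κ
    · obtain ⟨e, he⟩ := exists_subset_range_of_mk_le (T := μ.out) ((hF S hS).trans_eq μ.mk_out.symm)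
      exact ⟨e, fun _ => he⟩
    · exact ⟨fun _ => Classical.arbitrary X, fun h => absurd h hS⟩
  choose e he using henum
  -- A term `⟨(I, t), w⟩` names the `t`-th point of `F S`, where `S` is the set named by the
  -- subterms `w i` with `i ∈ I`.
  let eval : WType (fun a : Set κ.out × μ.out => a.1) → X :=
    WType.elim X fun a => e (range a.2) a.1.2
  refine ⟨range eval, mk_range_le.trans (WType.cardinalMk_le_of_le ?_), fun S hSH hS x hx => ?_⟩
  · have htwo : (2 : Cardinal) ^ κ ≤ μ :=
      (power_le_power_right (ofNat_le_aleph0.trans hμ)).trans hμκ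
    calc (Cardinal.sum fun a : Set κ.out × μ.out => μ ^ #a.1)
        ≤ Cardinal.sum fun _ : Set κ.out × μ.out => μ :=
          Cardinal.sum_le_sum _ _ fun a =>
            (power_le_power_left hμ₀ ((mk_set_le a.1).trans_eq κ.mk_out)).trans hμκ
      _ = 2 ^ κ * μ * μ := by simp
      _ ≤ μ := mul_le_of_le hμ (mul_le_of_le hμ htwo le_rfl) le_rfl
  · choose w hw using fun y : S => hSH y.2
    obtain ⟨g⟩ := Cardinal.le_def _ _ |>.1 (hS.trans_eq κ.mk_out.symm)
    let σ : S ≃ range g := Equiv.ofInjective g g.injective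
    have hrange : range (fun i => eval (w (σ.symm i))) = S := by
      simp only [hw]
      exact (σ.symm.surjective.range_comp _).trans Subtype.range_coe
    obtain ⟨t, rfl⟩ := he S hS hx
    exact ⟨⟨(range g, t), fun i => w (σ.symm i)⟩, congrArg (fun A => e A t) hrange⟩

end CardinalArithmetic

section CardinalInvariants

variable {X : Type u} [TopologicalSpace X] {κ μ : Cardinal.{u}}

theorem exists_subset_mem_closure_of_tightness_le (h : tightness X ≤ κ) {A : Set X} {x : X}
    (hx : x ∈ closure A) : ∃ B ⊆ A, #B ≤ κ ∧ x ∈ closure B := by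
  have hattained := csInf_mem (s := {κ : Cardinal.{u} | ℵ₀ ≤ κ ∧ ∀ (A : Set X) (x : X),
    x ∈ closure A → ∃ B ⊆ A, #B ≤ κ ∧ x ∈ closure B}) ⟨max ℵ₀ #X, le_max_left _ _,
      fun A x hx => ⟨A, Subset.rfl, (mk_set_le A).trans (le_max_right _ _), hx⟩⟩
  obtain ⟨B, hBA, hB, hxB⟩ := hattained.2 A x hx
  exact ⟨B, hBA, hB.trans h, hxB⟩

theorem exists_subset_mem_closure_of_tightness_coe_le {A C : Set X} (h : tightness C ≤ κ) {x : X}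
    (hxC : x ∈ C) (hx : x ∈ closure (A ∩ C)) : ∃ B ⊆ A, #B ≤ κ ∧ x ∈ closure B := by
  have hx' : (⟨x, hxC⟩ : C) ∈ closure ((↑) ⁻¹' A) := by
    rwa [closure_subtype, Subtype.image_preimage_coe, inter_comm]
  obtain ⟨B, hBA, hB, hxB⟩ := exists_subset_mem_closure_of_tightness_le h hx'
  exact ⟨(↑) '' B, image_subset_iff.2 hBA, mk_image_le.trans hB, closure_subtype.1 hxB⟩

theorem lindelofNumber_spec :
    ℵ₀ ≤ LindelofNumber X ∧ ∀ 𝒰 : Set (Set X), (∀ U ∈ 𝒰, IsOpen U) → ⋃₀ 𝒰 = Set.univ →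
      ∃ 𝒱 ⊆ 𝒰, #𝒱 ≤ LindelofNumber X ∧ ⋃₀ 𝒱 = Set.univ :=
  csInf_mem (s := {κ : Cardinal.{u} | ℵ₀ ≤ κ ∧ ∀ 𝒰 : Set (Set X), (∀ U ∈ 𝒰, IsOpen U) →
    ⋃₀ 𝒰 = Set.univ → ∃ 𝒱 ⊆ 𝒰, #𝒱 ≤ κ ∧ ⋃₀ 𝒱 = Set.univ}) ⟨max ℵ₀ #(Set X), le_max_left _ _,
      fun 𝒰 _ h𝒰 => ⟨𝒰, Subset.rfl, (mk_set_le 𝒰).trans (le_max_right _ _), h𝒰⟩⟩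

theorem aleph0_le_of_lindelofNumber_le (h : LindelofNumber X ≤ κ) : ℵ₀ ≤ κ :=
  lindelofNumber_spec.1.trans h

theorem exists_subcover_of_lindelofNumber_le (h : LindelofNumber X ≤ κ) {A : Set X}
    (hA : IsClosed A) {𝒰 : Set (Set X)} (h𝒰 : ∀ U ∈ 𝒰, IsOpen U) (hcov : A ⊆ ⋃₀ 𝒰) :
    ∃ 𝒱 ⊆ 𝒰, #𝒱 ≤ κ ∧ A ⊆ ⋃₀ 𝒱 := by
  have hcov' : ⋃₀ insert Aᶜ 𝒰 = Set.univ := by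
    rw [sUnion_insert, ← univ_subset_iff, ← compl_union_self A]
    exact union_subset_union_right _ hcov
  obtain ⟨𝒱, h𝒱𝒰, h𝒱, h𝒱cov⟩ := lindelofNumber_spec.2 (insert Aᶜ 𝒰)
    (forall_mem_insert.2 ⟨hA.isOpen_compl, h𝒰⟩) hcov'
  refine ⟨𝒱 ∩ 𝒰, inter_subset_right, (mk_le_mk_of_subset inter_subset_left).trans (h𝒱.trans h),
    fun x hx => ?_⟩
  obtain ⟨V, hV, hxV⟩ := mem_sUnion.1 (h𝒱cov ▸ mem_univ x)
  exact ⟨V, ⟨hV, (h𝒱𝒰 hV).resolve_left fun hVA => (hVA ▸ hxV) hx⟩, hxV⟩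

theorem lindelofNumber_le_aleph0 [LindelofSpace X] : LindelofNumber X ≤ ℵ₀ := by
  refine csInf_le' ⟨le_rfl, fun 𝒰 h𝒰 hcov => ?_⟩
  obtain ⟨𝒱, h𝒱𝒰, h𝒱, h𝒱cov⟩ := isLindelof_univ.elim_countable_subcover_image (c := id) h𝒰
    (by simpa [sUnion_eq_biUnion] using hcov.ge)
  exact ⟨𝒱, h𝒱𝒰, le_aleph0_iff_set_countable.2 h𝒱,
    univ_subset_iff.1 (by simpa [sUnion_eq_biUnion] using h𝒱cov)⟩

theorem exists_sInter_eq_singleton_of_psi_le [T1Space X] (h : psi X ≤ κ) (x : X) :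
    ∃ 𝒰 : Set (Set X), #𝒰 ≤ κ ∧ (∀ U ∈ 𝒰, IsOpen U ∧ x ∈ U) ∧ ⋂₀ 𝒰 = {x} := by
  have hattained := csInf_mem (s := {κ : Cardinal.{u} | ℵ₀ ≤ κ ∧ ∀ x : X, ∃ 𝒰 : Set (Set X),
    #𝒰 ≤ κ ∧ (∀ U ∈ 𝒰, IsOpen U ∧ x ∈ U) ∧ ⋂₀ 𝒰 = {x}}) ⟨max ℵ₀ #(Set X), le_max_left _ _,
      fun x => ⟨{U | IsOpen U ∧ x ∈ U}, (mk_set_le _).trans (le_max_right _ _), fun _ hU => hU,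
        subset_antisymm (fun y hy => by_contra fun hyx =>
          hy {y}ᶜ ⟨isOpen_compl_singleton, Ne.symm hyx⟩ rfl)
          (singleton_subset_iff.2 fun U hU => hU.2)⟩⟩
  obtain ⟨𝒰, h𝒰, hx, h𝒰x⟩ := hattained.2 x
  exact ⟨𝒰, h𝒰.trans h, hx, h𝒰x⟩

theorem exists_biInter_closure_subset_of_lindelofNumber_le [T2Space X] (h : LindelofNumber X ≤ κ)
    {x : X} {U : Set X} (hU : IsOpen U) (hx : x ∈ U) :
    ∃ 𝒱 : Set (Set X), #𝒱 ≤ κ ∧ (∀ V ∈ 𝒱, IsOpen V ∧ x ∈ V) ∧ ⋂ V ∈ 𝒱, closure V ⊆ U := by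
  have hcov : Uᶜ ⊆ ⋃₀ {N | IsOpen N ∧ x ∉ closure N} := fun y hy => by
    obtain ⟨N, M, hN, hM, hyN, hxM, hNM⟩ := t2_separation (ne_of_mem_of_not_mem hx hy).symm
    exact ⟨N, ⟨hN, disjoint_right.1 (hNM.closure_left hM) hxM⟩, hyN⟩
  obtain ⟨𝒩, h𝒩sub, h𝒩, h𝒩cov⟩ :=
    exists_subcover_of_lindelofNumber_le h hU.isClosed_compl (fun N hN => hN.1) hcov
  refine ⟨(fun N => (closure N)ᶜ) '' 𝒩, mk_image_le.trans h𝒩, forall_mem_image.2 fun N hN =>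
    ⟨isClosed_closure.isOpen_compl, (h𝒩sub hN).2⟩, fun z hz => by_contra fun hzU => ?_⟩
  obtain ⟨N, hN, hzN⟩ := h𝒩cov hzU
  have hdisj : Disjoint N (closure (closure N)ᶜ) :=
    (disjoint_compl_right.mono_left subset_closure).closure_right (h𝒩sub hN).1
  exact disjoint_left.1 hdisj hzN (mem_iInter₂.1 hz _ (mem_image_of_mem _ hN))

theorem exists_biInter_closure_eq_singleton [T2Space X] (hL : LindelofNumber X ≤ κ)
    (hψ : psi X ≤ κ) (x : X) : ∃ 𝒱 : Set (Set X),
      #𝒱 ≤ κ ∧ (∀ V ∈ 𝒱, IsOpen V ∧ x ∈ V) ∧ ⋂ V ∈ 𝒱, closure V = {x} := by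
  have hκ : ℵ₀ ≤ κ := aleph0_le_of_lindelofNumber_le hL
  obtain ⟨𝒰, h𝒰, hx, h𝒰x⟩ := exists_sInter_eq_singleton_of_psi_le hψ x
  choose! 𝒱 h𝒱 hx𝒱 h𝒱U using fun U (hU : U ∈ 𝒰) =>
    exists_biInter_closure_subset_of_lindelofNumber_le hL (hx U hU).1 (hx U hU).2
  have hnhds : ∀ V ∈ ⋃ U ∈ 𝒰, 𝒱 U, IsOpen V ∧ x ∈ V := fun V hV =>
    let ⟨U, hU, hVU⟩ := mem_iUnion₂.1 hV
    hx𝒱 U hU V hVU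
  refine ⟨⋃ U ∈ 𝒰, 𝒱 U, mk_biUnion_le_of_forall_mk_le hκ h𝒰 h𝒱, hnhds,
    subset_antisymm ?_ (singleton_subset_iff.2 (mem_iInter₂.2 fun V hV =>
      subset_closure (hnhds V hV).2))⟩
  rw [← h𝒰x]
  exact subset_sInter fun U hU =>
    (biInter_subset_biInter_left (subset_biUnion_of_mem hU)).trans (h𝒱U U hU)

theorem mem_clk_iff {A : Set X} {x : X} : x ∈ clk κ A ↔ ∃ B ⊆ A, #B ≤ κ ∧ x ∈ closure B := by
  simp only [clk, mem_iUnion, exists_prop, and_assoc]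

theorem clk_mono_left (h : κ ≤ μ) (A : Set X) : clk κ A ⊆ clk μ A := fun _ hx =>
  let ⟨B, hBA, hB, hxB⟩ := mem_clk_iff.1 hx
  mem_clk_iff.2 ⟨B, hBA, hB.trans h, hxB⟩

theorem IsWtWitness.mono {𝒞 : Set (Set X)} (h𝒞 : IsWtWitness κ 𝒞) (h : κ ≤ μ) :
    IsWtWitness μ 𝒞 := by
  have hpow : (2 : Cardinal) ^ κ ≤ 2 ^ μ := power_le_power_left two_ne_zero h
  exact ⟨h𝒞.1, h𝒞.2.1.trans hpow, fun C hC => ⟨(h𝒞.2.2 C hC).1.trans h,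
    univ_subset_iff.1 ((h𝒞.2.2 C hC).2 ▸ clk_mono_left hpow C)⟩⟩

theorem isWtWitness_singleton_univ (h : tightness (Set.univ : Set X) ≤ κ) :
    IsWtWitness κ ({Set.univ} : Set (Set X)) := by
  have hone : (1 : Cardinal) ≤ 2 ^ κ := Cardinal.one_le_iff_ne_zero.2 (power_ne_zero _ two_ne_zero)
  refine ⟨sUnion_singleton _, by simpa using hone, forall_eq.2 ⟨h, eq_univ_of_forall fun x => ?_⟩⟩
  exact mem_clk_iff.2 ⟨{x}, subset_univ _, by simpa using hone, subset_closure rfl⟩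

theorem exists_isWtWitness_of_wt_le (h : wt X ≤ κ) : ∃ 𝒞 : Set (Set X), IsWtWitness κ 𝒞 := by
  have hattained := csInf_mem (s := {κ : Cardinal.{u} | ℵ₀ ≤ κ ∧ ∃ 𝒞 : Set (Set X),
    IsWtWitness κ 𝒞}) ⟨max ℵ₀ (tightness (Set.univ : Set X)), le_max_left _ _, {Set.univ},
      isWtWitness_singleton_univ (le_max_right _ _)⟩
  obtain ⟨𝒞, h𝒞⟩ := hattained.2
  exact ⟨𝒞, h𝒞.mono h⟩

end CardinalInvariants

section ClosingOff

variable {X : Type u} [TopologicalSpace X] {κ : Cardinal.{u}} {𝒞 : Set (Set X)} {H : Set X}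

theorem IsWtWitness.exists_forall_mem_closure_inter (h𝒞 : IsWtWitness κ 𝒞) (hκ : ℵ₀ ≤ κ) (x : X) :
    ∃ D : Set X, #D ≤ 2 ^ κ ∧ ∀ C ∈ 𝒞, x ∈ closure (D ∩ C) := by
  choose! B hBC hB hxB using fun C (hC : C ∈ 𝒞) =>
    mem_clk_iff.1 ((h𝒞.2.2 C hC).2 ▸ mem_univ x : x ∈ clk (2 ^ κ) C)
  refine ⟨⋃ C ∈ 𝒞, B C, mk_biUnion_le_of_forall_mk_le (hκ.trans (cantor κ).le) h𝒞.2.1 hB,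
    fun C hC => closure_mono (subset_inter (subset_biUnion_of_mem hC) (hBC C hC)) (hxB C hC)⟩

theorem IsWtWitness.exists_saturated_closed_under (h𝒞 : IsWtWitness κ 𝒞) (hκ : ℵ₀ ≤ κ)
    (G : Set X → Set X) (hG : ∀ S : Set X, #S ≤ κ → #(G S) ≤ 2 ^ κ) :
    ∃ H : Set X, #H ≤ 2 ^ κ ∧ Saturated 𝒞 H ∧ ∀ S ⊆ H, #S ≤ κ → G S ⊆ H := by
  have hκ' : ℵ₀ ≤ (2 : Cardinal) ^ κ := hκ.trans (cantor κ).le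
  choose D hD hxD using h𝒞.exists_forall_mem_closure_inter hκ
  have hDG (S : Set X) (hS : #S ≤ κ) : #((⋃ x ∈ S, D x) ∪ G S : Set X) ≤ 2 ^ κ :=
    (mk_union_le _ _).trans (add_le_of_le hκ' (mk_biUnion_le_of_forall_mk_le hκ'
      (hS.trans (cantor κ).le) fun x _ => hD x) (hG S hS))
  obtain ⟨H, hH, hDGH⟩ := exists_mk_le_closed_under hκ'
    (by rw [← power_mul, mul_eq_self hκ]) (fun S => (⋃ x ∈ S, D x) ∪ G S) hDG
  simp only [union_subset_iff, iUnion₂_subset_iff] at hDGH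
  refine ⟨H, hH, fun C hC x hx => ?_, fun S hSH hS => (hDGH S hSH hS).2⟩
  have hDH : D x ⊆ H := (hDGH {x} (singleton_subset_iff.2 hx)
    (by simpa using one_le_aleph0.trans hκ)).1 x rfl
  exact closure_mono (inter_subset_inter_left C hDH) (hxD x C hC)

/-- The points `x` for which some family of at most `κ` subsets of `A` has `{x}` as the intersection
of the closures of its members. There are few of them, since `x` is determined by the family, and
together, for all `A ⊆ H` with `#A ≤ κ`, they cover the closure of a saturated set `H`. -/
def codedClosure (κ : Cardinal.{u}) (A : Set X) : Set X :=
  {x | ∃ 𝒮 : Set (Set X), 𝒮 ⊆ 𝒫 A ∧ #𝒮 ≤ κ ∧ ⋂ B ∈ 𝒮, closure B = {x}}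

theorem mk_codedClosure_le (hκ : ℵ₀ ≤ κ) {A : Set X} (hA : #A ≤ κ) :
    #(codedClosure κ A) ≤ 2 ^ κ := by
  choose code hsub hcard hcode using fun x : codedClosure κ A => x.2
  have hinj : Function.Injective fun x =>
      (⟨code x, hsub x, hcard x⟩ : {𝒮 : Set (Set X) // 𝒮 ⊆ 𝒫 A ∧ #𝒮 ≤ κ}) := fun x y hxy => by
    have hxy' : code x = code y := congrArg Subtype.val hxy
    exact Subtype.ext (singleton_injective ((hcode x).symm.trans (hxy' ▸ hcode y)))
  have hpow : #(𝒫 A) ≤ 2 ^ κ := (mk_powerset A).trans_le (power_le_power_left two_ne_zero hA)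
  calc #(codedClosure κ A)
      ≤ #{𝒮 : Set (Set X) // 𝒮 ⊆ 𝒫 A ∧ #𝒮 ≤ κ} := mk_le_of_injective hinj
    _ ≤ max #(𝒫 A) ℵ₀ ^ κ := mk_bounded_subset_le _ _
    _ ≤ (2 ^ κ) ^ κ := power_le_power_right (max_le hpow (hκ.trans (cantor κ).le))
    _ = 2 ^ κ := by rw [← power_mul, mul_eq_self hκ]

theorem Saturated.exists_subset_mem_codedClosure (hH : Saturated 𝒞 H) (hκ : ℵ₀ ≤ κ) {C : Set X}
    (hC : C ∈ 𝒞) (ht : tightness C ≤ κ) {x : X} (hxC : x ∈ C) (hx : x ∈ closure H)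
    {𝒱 : Set (Set X)} (h𝒱 : #𝒱 ≤ κ) (hx𝒱 : ∀ V ∈ 𝒱, IsOpen V ∧ x ∈ V)
    (h𝒱x : ⋂ V ∈ 𝒱, closure V = {x}) : ∃ S ⊆ H, #S ≤ κ ∧ x ∈ codedClosure κ S := by
  have hxHC : x ∈ closure (H ∩ C) := closure_minimal (hH C hC) isClosed_closure hx
  have htrace : ∀ V ∈ 𝒱, ∃ B ⊆ V ∩ H, #B ≤ κ ∧ x ∈ closure B := fun V hV =>
    exists_subset_mem_closure_of_tightness_coe_le ht hxC <| by
      rw [inter_assoc]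
      exact (hx𝒱 V hV).1.inter_closure ⟨(hx𝒱 V hV).2, hxHC⟩
  choose! B hBsub hB hxB using htrace
  refine ⟨⋃ V ∈ 𝒱, B V, iUnion₂_subset fun V hV => (hBsub V hV).trans inter_subset_right,
    mk_biUnion_le_of_forall_mk_le hκ h𝒱 hB, B '' 𝒱,
    image_subset_iff.2 fun V hV => subset_biUnion_of_mem hV, mk_image_le.trans h𝒱, ?_⟩
  rw [biInter_image]
  refine subset_antisymm ?_ (singleton_subset_iff.2 (mem_iInter₂.2 hxB))
  exact h𝒱x ▸ iInter₂_mono fun V hV => closure_mono ((hBsub V hV).trans inter_subset_left)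

theorem isClosed_of_codedClosure_subset [T2Space X] (hL : LindelofNumber X ≤ κ)
    (hψ : psi X ≤ κ) (h𝒞 : IsWtWitness κ 𝒞) (hsat : Saturated 𝒞 H)
    (hcode : ∀ S ⊆ H, #S ≤ κ → codedClosure κ S ⊆ H) : IsClosed H := by
  have hκ : ℵ₀ ≤ κ := aleph0_le_of_lindelofNumber_le hL
  refine isClosed_of_closure_subset fun x hx => ?_
  obtain ⟨C, hC, hxC⟩ := mem_sUnion.1 (h𝒞.1 ▸ mem_univ x : x ∈ ⋃₀ 𝒞)
  obtain ⟨𝒱, h𝒱, hx𝒱, h𝒱x⟩ := exists_biInter_closure_eq_singleton hL hψ x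
  obtain ⟨S, hSH, hS, hxS⟩ :=
    hsat.exists_subset_mem_codedClosure hκ hC (h𝒞.2.2 C hC).1 hxC hx h𝒱 hx𝒱 h𝒱x
  exact hcode S hSH hS hxS

theorem eq_univ_of_forall_subcover (hL : LindelofNumber X ≤ κ) (hH : IsClosed H)
    {𝒰 : X → Set (Set X)} (h𝒰 : ∀ x, ∀ U ∈ 𝒰 x, IsOpen U ∧ x ∈ U) (h𝒰x : ∀ x, ⋂₀ 𝒰 x = {x})
    (hcov : ∀ S ⊆ H, #S ≤ κ → ∀ 𝒱 ⊆ ⋃ x ∈ S, 𝒰 x, H ⊆ ⋃₀ 𝒱 → ⋃₀ 𝒱 = Set.univ) : H = Set.univ := by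
  refine eq_univ_of_forall fun p => by_contra fun hp => ?_
  have havoid : H ⊆ ⋃₀ {U | p ∉ U ∧ ∃ x ∈ H, U ∈ 𝒰 x} := fun x hx => by
    have hpx : p ∉ ⋂₀ 𝒰 x := h𝒰x x ▸ (ne_of_mem_of_not_mem hx hp).symm
    simp only [mem_sInter, not_forall] at hpx
    obtain ⟨U, hU, hpU⟩ := hpx
    exact ⟨U, ⟨hpU, x, hx, hU⟩, (h𝒰 x U hU).2⟩
  obtain ⟨𝒱, h𝒱sub, h𝒱, h𝒱cov⟩ := exists_subcover_of_lindelofNumber_le hL hH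
    (fun U hU => hU.2.elim fun x hx => (h𝒰 x U hx.2).1) havoid
  choose c hcH hc using fun V : 𝒱 => (h𝒱sub V.2).2
  have h𝒱univ : ⋃₀ 𝒱 = Set.univ := hcov (range c) (range_subset_iff.2 hcH)
    (mk_range_le.trans h𝒱) 𝒱 (fun V hV => mem_biUnion (mem_range_self ⟨V, hV⟩) (hc ⟨V, hV⟩)) h𝒱cov
  obtain ⟨V, hV, hpV⟩ := mem_sUnion.1 (h𝒱univ ▸ mem_univ p)
  exact (h𝒱sub hV).1 hpV

end ClosingOff

theorem stmt4_general {X : Type u} [TopologicalSpace X] [T2Space X] {κ : Cardinal.{u}}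
    (hL : LindelofNumber X ≤ κ) (hψ : psi X ≤ κ) (hwt : wt X ≤ κ) : #X ≤ 2 ^ κ := by
  have hκ : ℵ₀ ≤ κ := aleph0_le_of_lindelofNumber_le hL
  obtain _ | _ := isEmpty_or_nonempty X
  · simp
  obtain ⟨𝒞, h𝒞⟩ := exists_isWtWitness_of_wt_le hwt
  choose 𝒰 h𝒰 hx𝒰 h𝒰x using exists_sInter_eq_singleton_of_psi_le hψ
  choose! p hp using fun 𝒱 : Set (Set X) => (ne_univ_iff_exists_notMem (⋃₀ 𝒱)).1
  let G (S : Set X) : Set X := codedClosure κ S ∪ p '' 𝒫 (⋃ x ∈ S, 𝒰 x)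
  have hG (S : Set X) (hS : #S ≤ κ) : #(G S) ≤ 2 ^ κ := by
    have h𝒰S : #(⋃ x ∈ S, 𝒰 x : Set (Set X)) ≤ κ :=
      mk_biUnion_le_of_forall_mk_le hκ hS fun x _ => h𝒰 x
    have hpS : #(p '' 𝒫 (⋃ x ∈ S, 𝒰 x)) ≤ 2 ^ κ :=
      mk_image_le.trans ((mk_powerset _).trans_le (power_le_power_left two_ne_zero h𝒰S))
    exact (mk_union_le _ _).trans
      (add_le_of_le (hκ.trans (cantor κ).le) (mk_codedClosure_le hκ hS) hpS)
  obtain ⟨H, hH, hsat, hGH⟩ := h𝒞.exists_saturated_closed_under hκ G hG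
  simp only [G, union_subset_iff, image_subset_iff] at hGH
  have hclosed : IsClosed H :=
    isClosed_of_codedClosure_subset hL hψ h𝒞 hsat fun S hSH hS => (hGH S hSH hS).1
  have huniv : H = Set.univ := eq_univ_of_forall_subcover hL hclosed hx𝒰 h𝒰x
    fun S hSH hS 𝒱 h𝒱 hcov => by_contra fun h => hp 𝒱 h (hcov ((hGH S hSH hS).2 h𝒱))
  rwa [huniv, mk_univ] at hH

/-- Corollary 2.9. -/
theorem stmt4 {X : Type u} [TopologicalSpace X] [T2Space X] [LindelofSpace X]
    (hwt : wt X = ℵ₀)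
    (hpsi : ∀ x : X, ∃ 𝒰 : Set (Set X), 𝒰.Countable ∧
      (∀ U ∈ 𝒰, IsOpen U ∧ x ∈ U) ∧ ⋂₀ 𝒰 = {x}) :
    #X ≤ Cardinal.continuum := by
  have hψ : psi X ≤ ℵ₀ := csInf_le' ⟨le_rfl, by simpa only [le_aleph0_iff_set_countable] using hpsi⟩
  exact (stmt4_general lindelofNumber_le_aleph0 hψ hwt.le).trans_eq two_power_aleph0
end

section
/- Let X be a power homogeneous compactum and κ an infinite cardinal. If the set D = {x ∈ X : πχ(x,X) ≤ κ} is dense in X, then πχ(X) ≤ κ. -/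
open Cardinal Set TopologicalSpace

universe u

/-!
Call a map `f` on a product determined by the coordinates in `J` at a point `p` if `f` is constant,
up to inseparability, on the set of points agreeing with `p` on `J`. Let `f` be an open continuous
map from a product of compact spaces to an R₁ space, and let every coordinate of `p` have
π-character at most `κ`. Then `f p` has π-character at most `κ` exactly when `f` is determined at
`p` by at most `κ` coordinates: one direction chooses, by compactness of a fiber, finitely many
coordinates for every member of a local π-base at `f p`, the other pushes forward the boxes
supported on finite subsets of `J`.

The points at which `f` is determined by a fixed `J` form a closed set. If the target has a dense
set of points of π-character at most `κ`, every box around `p` contains a point at which `f` is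
determined by few coordinates, and a set `J` closed under passing from a finite support to the
coordinates of the points chosen in its boxes makes `p` a limit of points determined by `J`. For a
power homogeneous `X` this is applied to a homeomorphism of a power of `X`, followed by a
projection, which takes a constant point of small π-character to an arbitrary constant point.
-/

open scoped Topology

section Cardinality

variable {α ι : Type u} {κ : Cardinal.{u}}

theorem mk_biUnion_le_of_le (hκ : ℵ₀ ≤ κ) {s : Set ι} (hs : #s ≤ κ) {A : ι → Set α}
    (hA : ∀ i ∈ s, #(A i) ≤ κ) : #(⋃ i ∈ s, A i : Set α) ≤ κ :=
  (mk_biUnion_le A s).trans (mul_le_of_le hκ hs (ciSup_le' fun i => hA i i.2))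

theorem mk_iUnion_nat_le_of_le (hκ : ℵ₀ ≤ κ) {A : ℕ → Set α} (hA : ∀ n, #(A n) ≤ κ) :
    #(⋃ n, A n : Set α) ≤ κ := by
  have h := mk_iUnion_le_lift.{u, 0} A
  simp only [lift_uzero, mk_nat, lift_aleph0] at h
  exact h.trans (mul_le_of_le hκ hκ (ciSup_le' hA))

theorem mk_setOfPred_finset_subset_le (hκ : ℵ₀ ≤ κ) {J : Set α} (hJ : #J ≤ κ) :
    #{F : Finset α | (F : Set α) ⊆ J} ≤ κ := by
  classical
  have hrange : {F : Finset α | (F : Set α) ⊆ J} ⊆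
      range (Finset.map (Function.Embedding.subtype (· ∈ J))) := fun F hF =>
    ⟨F.subtype (· ∈ J), Finset.subtype_map_of_mem fun _ hi => hF hi⟩
  refine (mk_le_mk_of_subset hrange).trans (mk_range_le.trans ?_)
  rcases finite_or_infinite J with h | h
  · exact mk_le_aleph0.trans hκ
  · rwa [mk_finset_of_infinite]

theorem exists_closed_under_finset_operation (hκ : ℵ₀ ≤ κ) (G : Finset α → Set α)
    (hG : ∀ F, #(G F) ≤ κ) :
    ∃ J : Set α, #J ≤ κ ∧ ∀ F : Finset α, (F : Set α) ⊆ J → G F ⊆ J := by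
  let step (J : Set α) : Set α := J ∪ ⋃ F ∈ {F : Finset α | (F : Set α) ⊆ J}, G F
  let S (n : ℕ) : Set α := step^[n] ∅
  have hS (n : ℕ) : S (n + 1) = step (S n) := Function.iterate_succ_apply' _ _ _
  have hmono : Monotone S := monotone_nat_of_le_succ fun n => hS n ▸ subset_union_left
  have hcard (n : ℕ) : #(S n) ≤ κ := by
    induction n with
    | zero => simp [S]
    | succ n ih =>
      rw [hS]
      exact (mk_union_le _ _).trans (add_le_of_le hκ ih
        (mk_biUnion_le_of_le hκ (mk_setOfPred_finset_subset_le hκ ih) fun F _ => hG F))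
  refine ⟨⋃ n, S n, mk_iUnion_nat_le_of_le hκ hcard, fun F hF => ?_⟩
  obtain ⟨n, hn⟩ := hmono.directed_le.exists_mem_subset_of_finset_subset_biUnion hF
  calc G F ⊆ step (S n) := (subset_biUnion_of_mem (u := G) hn).trans subset_union_right
    _ = S (n + 1) := (hS n).symm
    _ ⊆ ⋃ n, S n := subset_iUnion S (n + 1)

end Cardinality

section LocalPiBase

variable {X : Type u} [TopologicalSpace X]

/-- A local π-base at `x`: a family of nonempty open sets such that every neighborhood of `x`
contains a member. Its members need not contain `x`. -/
structure IsLocalPiBase (x : X) (ℬ : Set (Set X)) : Prop where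
  isOpen : ∀ B ∈ ℬ, IsOpen B
  nonempty : ∀ B ∈ ℬ, B.Nonempty
  exists_subset : ∀ U ∈ 𝓝 x, ∃ B ∈ ℬ, B ⊆ U

theorem isLocalPiBase_iff {x : X} {ℬ : Set (Set X)} :
    IsLocalPiBase x ℬ ↔ (∀ B ∈ ℬ, IsOpen B ∧ B.Nonempty) ∧
      ∀ U : Set X, IsOpen U → x ∈ U → ∃ B ∈ ℬ, B ⊆ U := by
  refine ⟨fun h => ⟨fun B hB => ⟨h.isOpen B hB, h.nonempty B hB⟩,
    fun U hU hx => h.exists_subset U (hU.mem_nhds hx)⟩,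
    fun h => ⟨fun B hB => (h.1 B hB).1, fun B hB => (h.1 B hB).2, fun U hU => ?_⟩⟩
  obtain ⟨V, hVU, hV, hxV⟩ := mem_nhds_iff.1 hU
  obtain ⟨B, hB, hBV⟩ := h.2 V hV hxV
  exact ⟨B, hB, hBV.trans hVU⟩

theorem piCharPt_le_iff {x : X} {κ : Cardinal.{u}} :
    piCharPt x ≤ κ ↔ ∃ ℬ : Set (Set X), #ℬ ≤ κ ∧ IsLocalPiBase x ℬ := by
  simp only [isLocalPiBase_iff]
  refine ⟨fun h => ?_, fun h => csInf_le' h⟩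
  obtain ⟨ℬ, hcard, hℬ⟩ := csInf_mem (s := {μ : Cardinal.{u} | ∃ ℬ : Set (Set X), #ℬ ≤ μ ∧
    (∀ B ∈ ℬ, IsOpen B ∧ B.Nonempty) ∧ ∀ U : Set X, IsOpen U → x ∈ U → ∃ B ∈ ℬ, B ⊆ U})
    ⟨_, {U | IsOpen U ∧ U.Nonempty}, le_rfl, fun _ hB => hB,
      fun U hU hx => ⟨U, ⟨hU, x, hx⟩, Subset.rfl⟩⟩
  exact ⟨ℬ, hcard.trans h, hℬ⟩

end LocalPiBase

section Piecewise

open scoped Classical in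
theorem piecewise_piecewise_self {ι : Type*} {X : ι → Type*} (J : Set ι) (a b : ∀ i, X i) :
    J.piecewise (J.piecewise a b) a = a := by
  ext i
  by_cases hi : i ∈ J <;> simp [hi]

open scoped Classical in
theorem continuous_piecewise_pi {ι Z : Type*} {X : ι → Type*} [TopologicalSpace Z]
    [∀ i, TopologicalSpace (X i)] (J : Set ι) {a b : Z → ∀ i, X i} (ha : Continuous a)
    (hb : Continuous b) : Continuous fun z => J.piecewise (a z) (b z) := by
  refine continuous_pi fun i => ?_
  by_cases hi : i ∈ J <;> simp only [hi, not_false_eq_true, piecewise_eq_of_mem,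
    piecewise_eq_of_notMem] <;> fun_prop

end Piecewise

section DeterminedAt

variable {ι : Type*} {X : ι → Type*} {Y : Type*} [TopologicalSpace Y]

/-- `f` is determined by the coordinates in `J` at the point `p`: its value at any point agreeing
with `p` on `J` is `f p`. This is a pointwise version of `DependsOn`, with equality of values
weakened to inseparability so that it behaves well for targets that are not `T₀`. -/
def DeterminedAt (f : (∀ i, X i) → Y) (J : Set ι) (p : ∀ i, X i) : Prop :=
  ∀ q : ∀ i, X i, (∀ i ∈ J, q i = p i) → Inseparable (f q) (f p)

namespace DeterminedAt

variable {f : (∀ i, X i) → Y} {J K : Set ι} {p q : ∀ i, X i}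

theorem mono (h : DeterminedAt f J p) (hJK : J ⊆ K) : DeterminedAt f K p :=
  fun q hq => h q fun i hi => hq i (hJK hi)

theorem congr (h : DeterminedAt f J p) (hqp : ∀ i ∈ J, q i = p i) : DeterminedAt f J q :=
  fun r hr => (h r fun i hi => (hr i hi).trans (hqp i hi)).trans (h q hqp).symm

end DeterminedAt

open scoped Classical in
theorem determinedAt_iff_piecewise {f : (∀ i, X i) → Y} {J : Set ι} {p : ∀ i, X i} :
    DeterminedAt f J p ↔ ∀ c, Inseparable (f (J.piecewise p c)) (f p) := by
  refine ⟨fun h c => h _ fun i hi => piecewise_eq_of_mem _ _ _ hi, fun h q hq => ?_⟩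
  have hpq : J.piecewise p q = q := by
    ext i
    by_cases hi : i ∈ J <;> simp [hi, hq]
  simpa only [hpq] using h q

variable [∀ i, TopologicalSpace (X i)]

theorem isClosed_setOfPred_determinedAt [R1Space Y] {f : (∀ i, X i) → Y} (hf : Continuous f)
    (J : Set ι) : IsClosed {p | DeterminedAt f J p} := by
  classical
  simp only [determinedAt_iff_piecewise, ofPred_forall]
  exact isClosed_iInter fun c => isClosed_setOfPred_inseparable.preimage
    ((hf.comp (continuous_piecewise_pi J continuous_id (continuous_const (y := c)))).prodMk hf)

theorem exists_finset_forall_mem_of_isCompact_subset_isOpen {K U : Set (∀ i, X i)}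
    (hK : IsCompact K) (hU : IsOpen U) (hKU : K ⊆ U) :
    ∃ F : Finset ι, ∀ a ∈ K, ∀ b : ∀ i, X i, (∀ i ∈ F, b i = a i) → b ∈ U := by
  classical
  refine hK.induction_on (p := fun s => ∃ F : Finset ι, ∀ a ∈ s, ∀ b : ∀ i, X i,
    (∀ i ∈ F, b i = a i) → b ∈ U) ⟨∅, by simp⟩ ?mono ?union ?nhds
  case mono =>
    rintro s t hst ⟨F, hF⟩
    exact ⟨F, fun a ha => hF a (hst ha)⟩
  case union =>
    rintro s t ⟨F, hF⟩ ⟨G, hG⟩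
    refine ⟨F ∪ G, ?_⟩
    rintro a (ha | ha) b hb
    · exact hF a ha b fun i hi => hb i (Finset.mem_union_left _ hi)
    · exact hG a ha b fun i hi => hb i (Finset.mem_union_right _ hi)
  case nhds =>
    intro a ha
    obtain ⟨F, u, hu, huU⟩ := isOpen_pi_iff.1 hU a (hKU ha)
    have hau : (F : Set ι).pi u ∈ 𝓝 a :=
      (isOpen_set_pi F.finite_toSet fun i hi => (hu i hi).1).mem_nhds fun i hi => (hu i hi).2
    exact ⟨_, mem_nhdsWithin_of_mem_nhds hau, F,
      fun c hc b hb => huU fun i hi => (hb i hi).symm ▸ hc i hi⟩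

theorem exists_finset_forall_apply_mem [∀ i, CompactSpace (X i)] [R1Space Y]
    {f : (∀ i, X i) → Y} (hf : Continuous f) {B : Set Y} (hB : IsOpen B) {y : Y} (hy : y ∈ B) :
    ∃ F : Finset ι, ∀ a b : ∀ i, X i, f a = y → (∀ i ∈ F, b i = a i) → f b ∈ B := by
  -- `{y}` need not be closed, so the fiber over its closure serves as the compact set.
  have hyB : closure {y} ⊆ B :=
    isCompact_singleton.closure_subset_of_isOpen hB (singleton_subset_iff.2 hy)
  obtain ⟨F, hF⟩ := exists_finset_forall_mem_of_isCompact_subset_isOpen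
    (isClosed_closure.preimage hf).isCompact (hB.preimage hf) (preimage_mono hyB)
  exact ⟨F, fun a b ha hb => hF a (subset_closure ha) b hb⟩

end DeterminedAt

section FewCoordinates

variable {ι : Type u} {X : ι → Type*} [∀ i, TopologicalSpace (X i)] [∀ i, CompactSpace (X i)]
  {Y : Type u} [TopologicalSpace Y] [R1Space Y] {f : (∀ i, X i) → Y} {κ : Cardinal.{u}}

theorem exists_determinedAt_of_piCharPt_le (hf : Continuous f) (hfo : IsOpenMap f) (hκ : ℵ₀ ≤ κ)
    {p : ∀ i, X i} (hp : piCharPt (f p) ≤ κ) : ∃ J : Set ι, #J ≤ κ ∧ DeterminedAt f J p := by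
  classical
  obtain ⟨ℬ, hcard, hℬ⟩ := piCharPt_le_iff.1 hp
  have : Nonempty Y := ⟨f p⟩
  choose! y hy using hℬ.nonempty
  choose! F hF using fun B hB => exists_finset_forall_apply_mem hf (hℬ.isOpen B hB) (hy B hB)
  set J : Set ι := ⋃ B ∈ ℬ, (F B : Set ι)
  refine ⟨J, mk_biUnion_le_of_le hκ hcard fun B _ => (F B).finite_toSet.lt_aleph0.le.trans hκ,
    determinedAt_iff_piecewise.2 fun c => ?_⟩
  by_contra hne
  obtain ⟨W', W, hW', hW, hcW', hpW, hdisj⟩ := r1_separation hne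
  have hcont : Continuous fun a => f (J.piecewise a c) :=
    hf.comp (continuous_piecewise_pi J continuous_id continuous_const)
  have hN : IsOpen (f ⁻¹' W ∩ (fun a => f (J.piecewise a c)) ⁻¹' W') :=
    (hW.preimage hf).inter (hW'.preimage hcont)
  obtain ⟨B, hB, hBN⟩ := hℬ.exists_subset _ ((hfo _ hN).mem_nhds ⟨p, ⟨hpW, hcW'⟩, rfl⟩)
  obtain ⟨a, ⟨-, haW'⟩, hay⟩ := hBN (hy B hB)
  have hmem : f (J.piecewise a c) ∈ B := hF B hB a _ hay fun i hi =>
    piecewise_eq_of_mem _ _ _ (mem_biUnion hB hi)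
  have hBW : B ⊆ W := hBN.trans (image_subset_iff.2 inter_subset_left)
  exact disjoint_left.1 hdisj haW' (hBW hmem)

theorem exists_mem_determinedAt_of_dense (hf : Continuous f) (hfo : IsOpenMap f) (hκ : ℵ₀ ≤ κ)
    (hd : Dense {y : Y | piCharPt y ≤ κ}) {A : Set (∀ i, X i)} (hA : IsOpen A)
    (hne : A.Nonempty) : ∃ z ∈ A, ∃ J : Set ι, #J ≤ κ ∧ DeterminedAt f J z := by
  obtain ⟨_, ⟨z, hz, rfl⟩, hzκ⟩ := hd.inter_open_nonempty _ (hfo A hA) (hne.image f)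
  exact ⟨z, hz, exists_determinedAt_of_piCharPt_le hf hfo hκ hzκ⟩

end FewCoordinates

section Boxes

variable {ι : Type u} {X : ι → Type u}

/-- The boxes with finite support `F` whose sides are taken from the families `ℬ i`. If each `ℬ i`
is a local π-base at `p i`, the boxes of all finite supports form a local π-base at `p`. -/
def boxes (ℬ : ∀ i, Set (Set (X i))) (F : Finset ι) : Set (Set (∀ i, X i)) :=
  (F : Set ι).pi '' (F : Set ι).pi ℬ

theorem mk_boxes_le {κ : Cardinal.{u}} (hκ : ℵ₀ ≤ κ) {ℬ : ∀ i, Set (Set (X i))}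
    (hℬ : ∀ i, #(ℬ i) ≤ κ) (F : Finset ι) : #(boxes ℬ F) ≤ κ := by
  classical
  induction F using Finset.induction_on with
  | empty =>
    have hsub : boxes ℬ ∅ ⊆ {Set.univ} := by
      rintro _ ⟨s, -, rfl⟩
      simp
    exact (mk_le_mk_of_subset hsub).trans
      ((mk_singleton _).trans_le (one_lt_aleph0.le.trans hκ))
  | insert i F _ ih =>
    have hsub : boxes ℬ (insert i F) ⊆
        image2 (fun B A => Function.eval i ⁻¹' B ∩ A) (ℬ i) (boxes ℬ F) := by
      rintro _ ⟨s, hs, rfl⟩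
      exact ⟨s i, hs i (by simp), _, ⟨s, fun j hj => hs j (by simp_all), rfl⟩,
        by rw [Finset.coe_insert, insert_pi]⟩
    exact (mk_le_mk_of_subset hsub).trans (mk_image2_le.trans (mul_le_of_le hκ (hℬ i) ih))

variable [∀ i, TopologicalSpace (X i)] {p : ∀ i, X i} {ℬ : ∀ i, Set (Set (X i))}
  {F : Finset ι} {A : Set (∀ i, X i)}

theorem isOpen_of_mem_boxes (hℬ : ∀ i, IsLocalPiBase (p i) (ℬ i)) (hA : A ∈ boxes ℬ F) :
    IsOpen A := by
  obtain ⟨s, hs, rfl⟩ := hA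
  exact isOpen_set_pi F.finite_toSet fun i hi => (hℬ i).isOpen _ (hs i hi)

theorem nonempty_of_mem_boxes (hℬ : ∀ i, IsLocalPiBase (p i) (ℬ i)) (hA : A ∈ boxes ℬ F) :
    A.Nonempty := by
  obtain ⟨s, hs, rfl⟩ := hA
  refine pi_nonempty_iff.2 fun i => ?_
  by_cases hi : i ∈ F
  · exact ((hℬ i).nonempty _ (hs i hi)).imp fun _ hx _ => hx
  · exact ⟨p i, fun h => absurd h hi⟩

open scoped Classical in
theorem exists_mem_boxes_piecewise_mem (hℬ : ∀ i, IsLocalPiBase (p i) (ℬ i)) (J : Set ι)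
    {V : Set (∀ i, X i)} (hV : V ∈ 𝓝 p) :
    ∃ F : Finset ι, (F : Set ι) ⊆ J ∧ ∃ A ∈ boxes ℬ F, ∀ a ∈ A, J.piecewise a p ∈ V := by
  obtain ⟨V', hVV', hV', hpV'⟩ := mem_nhds_iff.1 hV
  obtain ⟨F, u, hu, huV⟩ := isOpen_pi_iff.1 hV' p hpV'
  have hside (i : ι) : ∃ B ∈ ℬ i, i ∈ F → B ⊆ u i := by
    by_cases hi : i ∈ F
    · obtain ⟨B, hB, hBu⟩ := (hℬ i).exists_subset _ ((hu i hi).1.mem_nhds (hu i hi).2)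
      exact ⟨B, hB, fun _ => hBu⟩
    · obtain ⟨B, hB, -⟩ := (hℬ i).exists_subset univ Filter.univ_mem
      exact ⟨B, hB, fun h => absurd h hi⟩
  choose s hs hsu using hside
  refine ⟨F.filter (· ∈ J), fun i hi => (Finset.mem_filter.1 hi).2, _, ⟨s, fun i _ => hs i, rfl⟩,
    fun a ha => hVV' (huV fun i hi => ?_)⟩
  by_cases hiJ : i ∈ J
  · rw [piecewise_eq_of_mem _ _ _ hiJ]
    exact hsu i hi (ha i (Finset.mem_filter.2 ⟨hi, hiJ⟩))
  · rw [piecewise_eq_of_notMem _ _ _ hiJ]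
    exact (hu i hi).2

end Boxes

section OpenMap

variable {ι : Type u} {X : ι → Type u} [∀ i, TopologicalSpace (X i)] [∀ i, CompactSpace (X i)]
  {Y : Type u} [TopologicalSpace Y] {f : (∀ i, X i) → Y} {p : ∀ i, X i} {κ : Cardinal.{u}}

open scoped Classical in
theorem DeterminedAt.eventually_forall_piecewise_mem {J : Set ι} (hJ : DeterminedAt f J p)
    (hf : Continuous f) {W : Set Y} (hW : W ∈ 𝓝 (f p)) :
    ∀ᶠ a in 𝓝 p, ∀ c, f (J.piecewise a c) ∈ W := by
  have hcont : Continuous fun q : (∀ i, X i) × (∀ i, X i) => f (J.piecewise q.1 q.2) :=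
    hf.comp (continuous_piecewise_pi J continuous_fst continuous_snd)
  have h := isCompact_univ.eventually_forall_of_forall_eventually (x₀ := p)
    (P := fun a c => f (J.piecewise a c) ∈ W) fun c _ => hcont.continuousAt.eventually_mem
      ((determinedAt_iff_piecewise.1 hJ c).nhds_eq.symm ▸ hW)
  simpa only [mem_univ, true_imp_iff] using h

theorem DeterminedAt.isLocalPiBase_image_boxes {J : Set ι} (hJ : DeterminedAt f J p)
    (hf : Continuous f) (hfo : IsOpenMap f) {ℬ : ∀ i, Set (Set (X i))}
    (hℬ : ∀ i, IsLocalPiBase (p i) (ℬ i)) :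
    IsLocalPiBase (f p)
      (⋃ F ∈ {F : Finset ι | (F : Set ι) ⊆ J}, (fun A => f '' A) '' boxes ℬ F) where
  isOpen B hB := by
    obtain ⟨F, -, A, hA, rfl⟩ := mem_iUnion₂.1 hB
    exact hfo A (isOpen_of_mem_boxes hℬ hA)
  nonempty B hB := by
    obtain ⟨F, -, A, hA, rfl⟩ := mem_iUnion₂.1 hB
    exact (nonempty_of_mem_boxes hℬ hA).image f
  exists_subset W hW := by
    classical
    obtain ⟨F, hFJ, A, hA, hAW⟩ :=
      exists_mem_boxes_piecewise_mem hℬ J (hJ.eventually_forall_piecewise_mem hf hW)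
    refine ⟨f '' A, mem_biUnion hFJ (mem_image_of_mem _ hA), image_subset_iff.2 fun a ha => ?_⟩
    simpa only [mem_preimage, mem_ofPred_eq, piecewise_piecewise_self] using hAW a ha a

theorem DeterminedAt.piCharPt_le {J : Set ι} (hJ : DeterminedAt f J p) (hJκ : #J ≤ κ)
    (hf : Continuous f) (hfo : IsOpenMap f) (hκ : ℵ₀ ≤ κ) (hp : ∀ i, piCharPt (p i) ≤ κ) :
    piCharPt (f p) ≤ κ := by
  choose ℬ hcard hℬ using fun i => piCharPt_le_iff.1 (hp i)
  exact piCharPt_le_iff.2 ⟨_, mk_biUnion_le_of_le hκ (mk_setOfPred_finset_subset_le hκ hJκ)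
    fun F _ => mk_image_le.trans (mk_boxes_le hκ hcard F),
    hJ.isLocalPiBase_image_boxes hf hfo hℬ⟩

variable [R1Space Y]

theorem exists_determinedAt_of_dense (hf : Continuous f) (hfo : IsOpenMap f) (hκ : ℵ₀ ≤ κ)
    (hd : Dense {y : Y | piCharPt y ≤ κ}) (hp : ∀ i, piCharPt (p i) ≤ κ) :
    ∃ J : Set ι, #J ≤ κ ∧ DeterminedAt f J p := by
  classical
  choose ℬ hcard hℬ using fun i => piCharPt_le_iff.1 (hp i)
  choose! z hzA K hKκ hzK using fun (F : Finset ι) (A : Set (∀ i, X i)) (hA : A ∈ boxes ℬ F) =>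
    exists_mem_determinedAt_of_dense hf hfo hκ hd (isOpen_of_mem_boxes hℬ hA)
      (nonempty_of_mem_boxes hℬ hA)
  obtain ⟨J, hJκ, hJ⟩ := exists_closed_under_finset_operation hκ (fun F => ⋃ A ∈ boxes ℬ F, K F A)
    fun F => mk_biUnion_le_of_le hκ (mk_boxes_le hκ hcard F) (hKκ F)
  refine ⟨J, hJκ, (isClosed_setOfPred_determinedAt hf J).closure_subset
    (mem_closure_iff_nhds.2 fun V hV => ?_)⟩
  obtain ⟨F, hFJ, A, hA, hAV⟩ := exists_mem_boxes_piecewise_mem hℬ J hV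
  have hKJ : K F A ⊆ J := (subset_biUnion_of_mem (u := K F) hA).trans (hJ F hFJ)
  exact ⟨_, hAV _ (hzA F A hA), ((hzK F A hA).mono hKJ).congr
    fun i hi => piecewise_eq_of_mem _ _ _ hi⟩

theorem piCharPt_le_of_isOpenMap_of_dense (hf : Continuous f) (hfo : IsOpenMap f) (hκ : ℵ₀ ≤ κ)
    (hd : Dense {y : Y | piCharPt y ≤ κ}) (hp : ∀ i, piCharPt (p i) ≤ κ) :
    piCharPt (f p) ≤ κ := by
  obtain ⟨J, hJκ, hJ⟩ := exists_determinedAt_of_dense hf hfo hκ hd hp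
  exact hJ.piCharPt_le hJκ hf hfo hκ hp

end OpenMap

theorem stmt12_general {X : Type u} [TopologicalSpace X] [CompactSpace X] [R1Space X]
    (hph : PowerHomogeneous X) (κ : Cardinal.{u}) (hκ : ℵ₀ ≤ κ)
    (hd : Dense {x : X | piCharPt x ≤ κ}) :
    piChar X ≤ κ := by
  refine ciSup_le' fun x => ?_
  obtain ⟨I, ⟨i⟩, hI⟩ := hph
  obtain ⟨d, hdκ⟩ := @Dense.nonempty X _ _ ⟨x⟩ hd
  obtain ⟨h, hh⟩ := hI (fun _ => d) fun _ => x
  have hle := piCharPt_le_of_isOpenMap_of_dense (f := fun z => h z i)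
    ((continuous_apply i).comp h.continuous) ((isOpenMap_eval i).comp h.isOpenMap) hκ hd
    (p := fun _ => d) fun _ => hdκ
  simpa only [hh] using hle

/-- Lemma 4.1, Ridderbos. -/
theorem stmt12 {X : Type u} [TopologicalSpace X] [CompactSpace X] [T2Space X]
    (hph : PowerHomogeneous X) (κ : Cardinal.{u}) (hκ : ℵ₀ ≤ κ)
    (hd : Dense {x : X | piCharPt x ≤ κ}) :
    piChar X ≤ κ :=
  stmt12_general hph κ hκ hd
end

section
/- Let X be a power homogeneous space with πχ(X) ≤ ω. If X contains a non-empty subseparable closed G^c_δ-set, then every point of X is contained in a subseparable closed G^c_δ-set. -/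
open Cardinal Set TopologicalSpace

universe u

/-!
Let `Φ` be a self-homeomorphism of `X ^ I` sending the constant point `p ∈ G` to the constant point
`x`, and write `e y = Φ⁻¹ (x with o-th coordinate y)`.  For countable `J`, the set of all `y` with
`e y i ∈ G` for every `i ∈ J` is a closed `G^c_δ`-set containing `x`, and the point is to choose `J`
so that it is subseparable.  For finite `R₀ ⊆ J` and `d` with coordinates on `R₀` in a countable set
whose closure contains `G`, let `t` equal `d` on `R₀` and `e (Φ d o)` elsewhere; the `o`-th
coordinates of the points `Φ t` form a countable set.  If they miss a neighbourhood of some `y` in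
the set above, then choosing `d` close to `e y` on `R₀` yields a nonempty finite set `E` of
coordinates outside `J` on which the `o`-th coordinate of `Φ` depends in two conflicting ways.  For
fixed `d`, a disjoint family of such `E` is countable: the members of an uncountable one would, by
the countable local π-bases, admit a common point at which both behaviours occur.  Hence a countable
`J` closed under maximal disjoint families meets all of them, which excludes `E`.
-/

section CountableLocalPiBase

open Topology

/-- A point has a countable local π-base; the sequence enumerating it may repeat sets. -/
def HasCountableLocalPiBase {X : Type*} [TopologicalSpace X] (x : X) : Prop :=
  ∃ b : ℕ → Set X, (∀ n, IsOpen (b n) ∧ (b n).Nonempty) ∧ ∀ U ∈ 𝓝 x, ∃ n, b n ⊆ U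

theorem hasCountableLocalPiBase_of_piChar_le_aleph0 {X : Type u} [TopologicalSpace X]
    (hpi : piChar X ≤ ℵ₀) (x : X) : HasCountableLocalPiBase x := by
  have hx : piCharPt x ≤ ℵ₀ := (le_ciSup bddAbove_of_small x).trans hpi
  obtain ⟨ℬ, hcard, hℬ, hbase⟩ : piCharPt x ∈ {κ : Cardinal.{u} | ∃ ℬ : Set (Set X), #ℬ ≤ κ ∧
      (∀ B ∈ ℬ, IsOpen B ∧ B.Nonempty) ∧ ∀ U : Set X, IsOpen U → x ∈ U → ∃ B ∈ ℬ, B ⊆ U} :=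
    csInf_mem ⟨_, {B : Set X | IsOpen B ∧ B.Nonempty}, le_rfl, fun _ hB => hB,
      fun U hU hxU => ⟨U, ⟨hU, x, hxU⟩, subset_rfl⟩⟩
  have hne : ℬ.Nonempty := (hbase univ isOpen_univ (mem_univ x)).imp fun _ hB => hB.1
  obtain ⟨b, rfl⟩ := (le_aleph0_iff_set_countable.1 (hcard.trans hx)).exists_eq_range hne
  refine ⟨b, forall_mem_range.1 hℬ, fun U hU => ?_⟩
  obtain ⟨V, hVU, hV, hxV⟩ := mem_nhds_iff.1 hU
  obtain ⟨_, ⟨n, rfl⟩, hn⟩ := hbase V hV hxV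
  exact ⟨n, hn.trans hVU⟩

theorem exists_not_countable_common_open_subsets {ι I : Type*} {Y : I → Type*}
    [∀ i, TopologicalSpace (Y i)] {R : Finset I} {u : ∀ i, Y i}
    (hu : ∀ i ∈ R, HasCountableLocalPiBase (u i)) {S : Set ι} (hS : ¬ S.Countable)
    {V : ι → ∀ i, Set (Y i)} (hV : ∀ s ∈ S, ∀ i ∈ R, V s i ∈ 𝓝 (u i)) :
    ∃ S' ⊆ S, ¬ S'.Countable ∧ ∃ D : ∀ i, Set (Y i),
      (∀ i ∈ R, IsOpen (D i) ∧ (D i).Nonempty) ∧ ∀ s ∈ S', ∀ i ∈ R, D i ⊆ V s i := by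
  classical
  choose! b hb hbase using hu
  let fiber (φ : R → ℕ) : Set ι := {s ∈ S | ∀ i : R, b i (φ i) ⊆ V s i}
  have hcover : S ⊆ ⋃ φ, fiber φ := fun s hs => by
    choose φ hφ using fun i : R => hbase i i.2 (V s i) (hV s hs i i.2)
    exact mem_iUnion.2 ⟨φ, hs, hφ⟩
  obtain ⟨φ, hφ⟩ : ∃ φ, ¬ (fiber φ).Countable := by
    by_contra! hcount
    exact hS ((countable_iUnion hcount).mono hcover)
  refine ⟨fiber φ, sep_subset _ _, hφ, fun i => if hi : i ∈ R then b i (φ ⟨i, hi⟩) else univ,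
    fun i hi => ?_, fun s hs i hi => ?_⟩
  · simpa only [dif_pos hi] using hb i hi (φ ⟨i, hi⟩)
  · simpa only [dif_pos hi] using hs.2 ⟨i, hi⟩

end CountableLocalPiBase

section FiniteSets

variable {I : Type*}

theorem not_countable_setOf_mem_and_disjoint {S : Set (Finset I)} (hS : ¬ S.Countable)
    (hdisj : S.PairwiseDisjoint id) (T : Finset I) : ¬ {E ∈ S | Disjoint E T}.Countable := by
  intro hcount
  have hmeet : (⋃ t ∈ T, {E ∈ S | t ∈ E}).Countable := by
    refine T.countable_toSet.biUnion fun t _ => Set.Subsingleton.countable ?_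
    exact fun E hE E' hE' => hdisj.elim_finset hE.1 hE'.1 t hE.2 hE'.2
  refine hS ((hcount.union hmeet).mono fun E hE => ?_)
  by_cases h : Disjoint E T
  · exact Or.inl ⟨hE, h⟩
  · obtain ⟨t, htE, htT⟩ := Finset.not_disjoint_iff.1 h
    exact Or.inr (mem_biUnion htT ⟨hE, htE⟩)

theorem exists_piecewise_of_pairwiseDisjoint {X : I → Type*} {S : Set (Finset I)}
    (hdisj : S.PairwiseDisjoint id) (k : Finset I → ∀ i, X i) (x : ∀ i, X i) :
    ∃ g : ∀ i, X i, (∀ E ∈ S, ∀ i ∈ E, g i = k E i) ∧ ∀ i, (∀ E ∈ S, i ∉ E) → g i = x i := by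
  suffices h : ∀ i, ∃ a : X i, (∀ E ∈ S, i ∈ E → a = k E i) ∧ ((∀ E ∈ S, i ∉ E) → a = x i) by
    choose g hgk hgx using h
    exact ⟨g, fun E hE i hi => hgk i E hE hi, hgx⟩
  intro i
  by_cases hi : ∃ E ∈ S, i ∈ E
  · obtain ⟨E, hE, hiE⟩ := hi
    refine ⟨k E i, fun E' hE' hiE' => ?_, fun h => absurd hiE (h E hE)⟩
    rw [hdisj.elim_finset hE hE' i hiE hiE']
  · push Not at hi
    exact ⟨x i, fun E hE hiE => absurd hiE (hi E hE), fun _ => rfl⟩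

theorem exists_countable_inter_nonempty_of_countable_disjoint {P : Finset I → Prop}
    (hP : ∀ S : Set (Finset I), (∀ E ∈ S, P E) → S.PairwiseDisjoint id → S.Countable) :
    ∃ A : Set I, A.Countable ∧ ∀ E, P E → E.Nonempty → ∃ i ∈ E, i ∈ A := by
  obtain ⟨M, hM⟩ := zorn_subset {S : Set (Finset I) | (∀ E ∈ S, P E) ∧ S.PairwiseDisjoint id}
    fun C hC hchain => ⟨⋃₀ C, ⟨fun E ⟨S, hS, hE⟩ => (hC hS).1 E hE,
      (pairwiseDisjoint_sUnion hchain.directedOn).2 fun S hS => (hC hS).2⟩,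
      fun S hS => subset_sUnion_of_mem hS⟩
  refine ⟨⋃ E ∈ M, (E : Set I), (hP M hM.prop.1 hM.prop.2).biUnion
    fun E _ => E.countable_toSet, fun E hE ⟨i, hi⟩ => ?_⟩
  by_contra! havoid
  have hdis : ∀ E' ∈ M, Disjoint E E' := fun E' hE' =>
    Finset.disjoint_left.2 fun j hj hj' => havoid j hj (mem_biUnion hE' hj')
  have hEM : E ∈ M := hM.le_of_ge
    ⟨forall_mem_insert.2 ⟨hE, hM.prop.1⟩, hM.prop.2.insert fun E' hE' _ => hdis E' hE'⟩
    (subset_insert E M) (mem_insert E M)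
  exact havoid i hi (mem_biUnion hEM hi)

theorem countable_setOf_finset_coe_subset {J : Set I} (hJ : J.Countable) :
    {R : Finset I | (R : Set I) ⊆ J}.Countable :=
  ((countable_ofPred_finite_subset hJ).preimage Finset.coe_injective).mono
    fun R hR => And.intro R.finite_toSet hR

theorem exists_countable_superset_closed_under {A : Finset I → Set I}
    (hA : ∀ R, (A R).Countable) {J₀ : Set I} (hJ₀ : J₀.Countable) :
    ∃ J : Set I, J.Countable ∧ J₀ ⊆ J ∧ ∀ R : Finset I, (R : Set I) ⊆ J → A R ⊆ J := by
  let next (J : Set I) : Set I := J ∪ ⋃ R ∈ {R : Finset I | (R : Set I) ⊆ J}, A R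
  let J (n : ℕ) : Set I := next^[n] J₀
  have hsucc (n : ℕ) : J (n + 1) = next (J n) := Function.iterate_succ_apply' next n J₀
  have hmono : Monotone J := monotone_nat_of_le_succ fun n => hsucc n ▸ subset_union_left
  have hcount (n : ℕ) : (J n).Countable := by
    induction n with
    | zero => exact hJ₀
    | succ n ih =>
      rw [hsucc]
      exact ih.union ((countable_setOf_finset_coe_subset ih).biUnion fun R _ => hA R)
  refine ⟨⋃ n, J n, countable_iUnion hcount, subset_iUnion J 0, fun R hR => ?_⟩
  obtain ⟨n, hn⟩ := hmono.directed_le.exists_mem_subset_of_finset_subset_biUnion hR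
  refine subset_iUnion_of_subset (n + 1) ?_
  rw [hsucc]
  exact subset_union_of_subset_right (subset_biUnion_of_mem (u := A) hn) _

end FiniteSets

section Products

open Topology

variable {I : Type*} {X Y : I → Type*} [∀ i, TopologicalSpace (X i)] [∀ i, TopologicalSpace (Y i)]

theorem exists_open_box_subset {O : Set (∀ i, X i)} (hO : IsOpen O) {f : ∀ i, X i} (hf : f ∈ O) :
    ∃ (F : Finset I) (v : ∀ i, Set (X i)), (∀ i, IsOpen (v i)) ∧ (∀ i, f i ∈ v i) ∧
      (F : Set I).pi v ⊆ O := by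
  classical
  obtain ⟨F, w, hw, hsub⟩ := isOpen_pi_iff.1 hO f hf
  refine ⟨F, F.piecewise w fun _ => univ, fun i => ?_, fun i => ?_, fun x hx => hsub fun i hi => ?_⟩
  · by_cases hi : i ∈ F <;> simp [hi, hw]
  · by_cases hi : i ∈ F <;> simp [hi, hw]
  · simpa [Finset.mem_coe.1 hi] using hx i hi

theorem exists_nhds_slice [DecidableEq I] {O : Set (∀ i, Y i)} (hO : IsOpen O) {z : ∀ i, Y i}
    {o : I} {y : Y o} (hy : Function.update z o y ∈ O) :
    ∃ (M : Set (Y o)) (N : Set (∀ i, Y i)), IsOpen M ∧ y ∈ M ∧ IsOpen N ∧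
      (∀ s, Function.update z o s ∈ N) ∧ ∀ w ∈ N, w o ∈ M → w ∈ O := by
  obtain ⟨F, v, v_open, mem_v, hv⟩ := exists_open_box_subset hO hy
  refine ⟨v o, (F.erase o : Set I).pi v, v_open o, by simpa using mem_v o,
    isOpen_set_pi (F.erase o).finite_toSet fun i _ => v_open i, fun s i hi => ?_,
    fun w hwN hwM => hv fun i hi => ?_⟩
  · have hio : i ≠ o := (Finset.mem_erase.1 hi).1
    simpa only [Function.update_of_ne hio] using mem_v i
  · by_cases hio : i = o
    · exact hio ▸ hwM
    · exact hwN i (Finset.mem_erase.2 ⟨hio, hi⟩)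

variable (Φ : (∀ i, X i) ≃ₜ ∀ i, Y i)

theorem exists_open_box_piecewise_symm_mem [DecidableEq I] {O : Set (∀ i, X i)} (hO : IsOpen O)
    {a : ∀ i, X i} (ha : a ∈ O) :
    ∃ (F : Finset I) (V : ∀ i, Set (Y i)), (∀ i, IsOpen (V i)) ∧ (∀ i, Φ a i ∈ V i) ∧
      ∀ w ∈ (F : Set I).pi V, ∀ E : Finset I, E.piecewise a (Φ.symm w) ∈ O := by
  obtain ⟨T, p, p_open, mem_p, hp⟩ := exists_open_box_subset hO ha
  obtain ⟨F, V, V_open, mem_V, hV⟩ := exists_open_box_subset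
    ((isOpen_set_pi T.finite_toSet fun i _ => p_open i).preimage Φ.symm.continuous)
    (f := Φ a) fun i _ => by simpa using mem_p i
  refine ⟨F, V, V_open, mem_V, fun w hw E => hp fun i hi => ?_⟩
  by_cases hiE : i ∈ E
  · simpa only [Finset.piecewise_eq_of_mem _ _ _ hiE] using mem_p i
  · simpa only [Finset.piecewise_eq_of_notMem _ _ _ hiE] using hV hw i hi

/- The coordinates in `⋃ S'` are not seen by the finitely many coordinates on which the relation
between `w` and `Φ⁻¹ w` depends near a point of the common open box, so they may be changed freely,
first in `Y` and then in `X`. -/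
theorem exists_not_countable_common_mem_stable {R : Finset I} {u : ∀ i, Y i}
    (hu : ∀ i ∈ R, HasCountableLocalPiBase (u i)) {S : Set (Finset I)} (hS : ¬ S.Countable)
    (hdisj : S.PairwiseDisjoint id) (hSR : ∀ E ∈ S, Disjoint E R)
    {V : Finset I → ∀ i, Set (Y i)} (hV : ∀ E ∈ S, ∀ i, V E i ∈ 𝓝 (u i)) :
    ∃ S' ⊆ S, ¬ S'.Countable ∧ ∃ w : ∀ i, Y i, (∀ E ∈ S', w ∈ (R ∪ E : Set I).pi (V E)) ∧
      ∀ g : ∀ i, X i, (∀ i, (∀ E ∈ S', i ∉ E) → g i = Φ.symm w i) →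
        ∀ E ∈ S', ∀ i ∈ R, Φ g i ∈ V E i := by
  classical
  obtain ⟨S₁, hS₁, hS₁_unc, D, hD, hDV⟩ :=
    exists_not_countable_common_open_subsets hu hS fun E hE i _ => hV E hE i
  obtain ⟨e, he⟩ : ∃ e, e ∈ (R : Set I).pi D := by
    have hne : ∀ i, ∃ a : Y i, i ∈ R → a ∈ D i := fun i => by
      by_cases hi : i ∈ R
      · exact (hD i hi).2.imp fun _ ha _ => ha
      · exact ⟨u i, fun h => absurd h hi⟩
    choose e he using hne
    exact ⟨e, he⟩
  have hD_open : IsOpen ((R : Set I).pi D) :=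
    isOpen_set_pi R.finite_toSet fun i hi => (hD i hi).1
  obtain ⟨T, c, c_open, mem_c, hc⟩ := exists_open_box_subset (hD_open.preimage Φ.continuous)
    (f := Φ.symm e) (by simpa using he)
  have hc_open : IsOpen ((T : Set I).pi c) := isOpen_set_pi T.finite_toSet fun i _ => c_open i
  obtain ⟨T', c', -, mem_c', hc'⟩ := exists_open_box_subset
    (hc_open.preimage Φ.symm.continuous) (f := e) fun i _ => mem_c i
  let S₂ : Set (Finset I) := {E ∈ S₁ | Disjoint E (T ∪ T')}
  have hS₂S : S₂ ⊆ S := (sep_subset _ _).trans hS₁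
  have hS₂T : ∀ i ∈ T ∪ T', ∀ E ∈ S₂, i ∉ E := fun i hi E hE =>
    Finset.disjoint_right.1 hE.2 hi
  have hS₂R : ∀ i ∈ R, ∀ E ∈ S₂, i ∉ E := fun i hi E hE =>
    Finset.disjoint_right.1 (hSR E (hS₂S hE)) hi
  obtain ⟨w, hwu, hwe⟩ := exists_piecewise_of_pairwiseDisjoint (hdisj.subset hS₂S) (fun _ => u) e
  have hw : Φ.symm w ∈ (T : Set I).pi c := hc' fun i hi => by
    rw [hwe i (hS₂T i (Finset.mem_union_right T hi))]
    exact mem_c' i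
  refine ⟨S₂, hS₂S, not_countable_setOf_mem_and_disjoint hS₁_unc (hdisj.subset hS₁) _, w,
    fun E hE i hi => ?_, fun g hg E hE i hi => hDV E hE.1 i hi (hc (fun j hj => ?_) i hi)⟩
  · rcases hi with hi | hi
    · rw [hwe i (hS₂R i hi)]
      exact hDV E hE.1 i hi (he i hi)
    · rw [hwu E hE i hi]
      exact mem_of_mem_nhds (hV E (hS₂S hE) i)
  · rw [hg j (hS₂T j (Finset.mem_union_left T' hj))]
    exact hw j hj

end Products

section Obstructions

open Topology

variable {I : Type*} [DecidableEq I] {X Y : I → Type*} [∀ i, TopologicalSpace (X i)]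
  [∀ i, TopologicalSpace (Y i)]

/-- A finite set `E` of coordinates on which the `o`-th coordinate of `Φ` depends in two conflicting
ways, as witnessed by `M`, `U`, `V` and `k`: near `u`, inserting `k` on `E` in the preimage puts the
`o`-th coordinate of the image into `M`, while near `b`, inserting `a` on `E` keeps it out of `M`.
In the application `u = Φ d`, `b` is the base point with `o`-th coordinate `Φ d o`, and
`a = Φ⁻¹ b`. -/
structure IsObstruction (Φ : (∀ i, X i) ≃ₜ ∀ i, Y i) (o : I) (u b : ∀ i, Y i) (a : ∀ i, X i)
    (R₀ R E : Finset I) (M : Set (Y o)) (U V : ∀ i, Set (Y i)) (k : ∀ i, X i) : Prop where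
  isOpen_target : IsOpen M
  mem_nhds : ∀ i, U i ∈ 𝓝 (u i)
  isOpen : ∀ i, IsOpen (V i)
  mem : ∀ i, b i ∈ V i
  map_mem : ∀ w ∈ (R ∪ E : Set I).pi U, ∀ x : ∀ i, X i, (∀ i ∈ R₀, x i = Φ.symm w i) →
    (∀ i ∈ E, x i = k i) → Φ x o ∈ M
  map_notMem : ∀ w ∈ (R ∪ E : Set I).pi V, Φ (E.piecewise a (Φ.symm w)) o ∉ M

variable {Φ : (∀ i, X i) ≃ₜ ∀ i, Y i} {o : I} {u b : ∀ i, Y i} {a : ∀ i, X i} {R₀ R : Finset I}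

theorem IsObstruction.nonempty {E : Finset I} {M : Set (Y o)} {U V : ∀ i, Set (Y i)}
    {k : ∀ i, X i} (h : IsObstruction Φ o u b a R₀ R E M U V k) (hub : b o = u o) :
    E.Nonempty := by
  by_contra! rfl
  have hmem : u o ∈ M := by
    simpa using h.map_mem u (fun i _ => mem_of_mem_nhds (h.mem_nhds i)) (Φ.symm u)
      (fun _ _ => rfl) (by simp)
  have hnotMem : b o ∉ M := by simpa using h.map_notMem b fun i _ => h.mem i
  exact hnotMem (hub ▸ hmem)

variable {S : Set (Finset I)} {M : Finset I → Set (Y o)} {U V : Finset I → ∀ i, Set (Y i)}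
  {k : Finset I → ∀ i, X i}

theorem exists_not_countable_common_target (hu : ∀ i ∈ R, HasCountableLocalPiBase (u i))
    (hub : b o = u o) (hR₀ : R₀ ⊆ R) (ho : o ∈ R) (hS : ¬ S.Countable)
    (hdisj : S.PairwiseDisjoint id) (hSR : ∀ E ∈ S, Disjoint E R)
    (h : ∀ E ∈ S, IsObstruction Φ o u b a R₀ R E (M E) (U E) (V E) (k E)) :
    ∃ S' ⊆ S, ¬ S'.Countable ∧ ∃ s, ∀ E ∈ S', s ∈ M E ∩ V E o := by
  obtain ⟨S', hS', hS'_unc, w, hw, hstable⟩ := exists_not_countable_common_mem_stable Φ hu hS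
    hdisj hSR (V := fun E => Function.update (U E) o (U E o ∩ V E o)) fun E hE i => by
      rcases eq_or_ne i o with rfl | hi
      · have hV : V E i ∈ 𝓝 (u i) := ((h E hE).isOpen i).mem_nhds (hub ▸ (h E hE).mem i)
        simpa only [Function.update_self] using Filter.inter_mem ((h E hE).mem_nhds i) hV
      · simpa only [Function.update_of_ne hi] using (h E hE).mem_nhds i
  obtain ⟨g, hgk, hgw⟩ :=
    exists_piecewise_of_pairwiseDisjoint (hdisj.subset hS') k (Φ.symm w)
  have hwU : ∀ E ∈ S', w ∈ (R ∪ E : Set I).pi (U E) := fun E hE i hi => by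
    have hwi := hw E hE i hi
    rcases eq_or_ne i o with rfl | hio
    · exact (Function.update_self i _ (U E) ▸ hwi).1
    · simpa only [Function.update_of_ne hio] using hwi
  have hgR₀ : ∀ i ∈ R₀, g i = Φ.symm w i := fun i hi =>
    hgw i fun E hE => Finset.disjoint_right.1 (hSR E (hS' hE)) (hR₀ hi)
  refine ⟨S', hS', hS'_unc, Φ g o, fun E hE => ⟨?_, ?_⟩⟩
  · exact (h E (hS' hE)).map_mem w (hwU E hE) g hgR₀ (hgk E hE)
  · have hgo := hstable g hgw E hE o ho
    exact (Function.update_self o _ (U E) ▸ hgo).2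

theorem countable_of_common_target (hb : ∀ i (y : Y i), HasCountableLocalPiBase y)
    (ho : o ∈ R) (hdisj : S.PairwiseDisjoint id) (hSR : ∀ E ∈ S, Disjoint E R)
    (h : ∀ E ∈ S, IsObstruction Φ o u b a R₀ R E (M E) (U E) (V E) (k E))
    {s : Y o} (hs : ∀ E ∈ S, s ∈ M E ∩ V E o) : S.Countable := by
  by_contra hS
  obtain ⟨S', hS', hS'_unc, w, hw, hstable⟩ := exists_not_countable_common_mem_stable Φ
    (u := Function.update b o s) (fun i _ => hb i _) hS hdisj hSR
    (V := fun E => Function.update (V E) o (M E ∩ V E o)) fun E hE i => by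
      rcases eq_or_ne i o with rfl | hi
      · simpa only [Function.update_self] using
          ((h E hE).isOpen_target.inter ((h E hE).isOpen i)).mem_nhds (hs E hE)
      · simpa only [Function.update_of_ne hi] using ((h E hE).isOpen i).mem_nhds ((h E hE).mem i)
  obtain ⟨E, hE⟩ : S'.Nonempty := nonempty_iff_ne_empty.2 fun h => hS'_unc (h ▸ countable_empty)
  have hwV : w ∈ (R ∪ E : Set I).pi (V E) := fun i hi => by
    have hwi := hw E hE i hi
    rcases eq_or_ne i o with rfl | hio
    · exact (Function.update_self i _ (V E) ▸ hwi).2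
    · simpa only [Function.update_of_ne hio] using hwi
  refine (h E (hS' hE)).map_notMem w hwV ?_
  have hgo := hstable (E.piecewise a (Φ.symm w))
    (fun i hi => Finset.piecewise_eq_of_notMem _ _ _ (hi E hE)) E hE o ho
  exact (Function.update_self o _ (V E) ▸ hgo).1

theorem countable_of_isObstruction (hb : ∀ i (y : Y i), HasCountableLocalPiBase y)
    (hub : b o = u o) (hR₀ : R₀ ⊆ R) (ho : o ∈ R) (hdisj : S.PairwiseDisjoint id)
    (hSR : ∀ E ∈ S, Disjoint E R)
    (h : ∀ E ∈ S, ∃ M U V k, IsObstruction Φ o u b a R₀ R E M U V k) : S.Countable := by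
  by_contra hS
  have : Nonempty (∀ i, X i) := ⟨a⟩
  choose! M U V k h using h
  obtain ⟨S', hS', hS'_unc, s, hs⟩ :=
    exists_not_countable_common_target (fun i _ => hb i _) hub hR₀ ho hS hdisj hSR h
  exact hS'_unc (countable_of_common_target hb ho (hdisj.subset hS')
    (fun E hE => hSR E (hS' hE)) (fun E hE => h E (hS' hE)) hs)

end Obstructions

section Slices

variable {I : Type*} [DecidableEq I] {X Y : I → Type*} [∀ i, TopologicalSpace (X i)]
  [∀ i, TopologicalSpace (Y i)]

/-- The embedding of the factor `Y o` into `∏ X i` as the preimage under `Φ` of the line through `z`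
in direction `o`. -/
def slice (Φ : (∀ i, X i) ≃ₜ ∀ i, Y i) (z : ∀ i, Y i) (o : I) (y : Y o) : ∀ i, X i :=
  Φ.symm (Function.update z o y)

/-- The point which approximates `slice Φ z o y` when `d` does so on `R₀`: it is `d` on `R₀`, and
elsewhere it is the point of the slice whose image has the same `o`-th coordinate as `Φ d`. -/
def testPoint (Φ : (∀ i, X i) ≃ₜ ∀ i, Y i) (z : ∀ i, Y i) (o : I) (R₀ : Finset I)
    (d : ∀ i, X i) : ∀ i, X i :=
  R₀.piecewise d (slice Φ z o (Φ d o))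

variable (Φ : (∀ i, X i) ≃ₜ ∀ i, Y i) (z : ∀ i, Y i) (o : I)

theorem continuous_slice : Continuous (slice Φ z o) :=
  Φ.symm.continuous.comp (continuous_const.update o continuous_id)

@[simp]
theorem apply_slice (y : Y o) : Φ (slice Φ z o y) = Function.update z o y :=
  Φ.apply_symm_apply _

variable {z o}

theorem exists_isObstruction_of_testPoint_notMem {J : Set I} (ho : o ∈ J) {W : Set (Y o)}
    (hW : IsOpen W) {y : Y o} (hy : y ∈ W) :
    ∃ (R₀ : Finset I) (v : ∀ i, Set (X i)), (R₀ : Set I) ⊆ J ∧ (∀ i, IsOpen (v i)) ∧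
      (∀ i, slice Φ z o y i ∈ v i) ∧ ∀ d ∈ (R₀ : Set I).pi v, Φ (testPoint Φ z o R₀ d) o ∉ W →
        ∃ R E : Finset I, R₀ ⊆ R ∧ o ∈ R ∧ (R : Set I) ⊆ J ∧ Disjoint (E : Set I) J ∧
          ∃ M U V k, IsObstruction Φ o (Φ d) (Function.update z o (Φ d o))
            (slice Φ z o (Φ d o)) R₀ R E M U V k := by
  classical
  have hΦo : Continuous fun x => Φ x o := (continuous_apply o).comp Φ.continuous
  obtain ⟨F₁, n, n_open, mem_n, hn⟩ :=
    exists_open_box_subset (hW.preimage hΦo) (f := slice Φ z o y) (by simpa using hy)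
  obtain ⟨M, N, M_open, hyM, N_open, mem_N, hMN⟩ := exists_nhds_slice
    ((isOpen_set_pi F₁.finite_toSet fun i _ => n_open i).preimage Φ.symm.continuous)
    (z := z) (y := y) fun i _ => mem_n i
  obtain ⟨F₂, n', n'_open, mem_n', hn'⟩ :=
    exists_open_box_subset (M_open.preimage hΦo) (f := slice Φ z o y) (by simpa using hyM)
  let R₀ : Finset I := {i ∈ F₁ ∪ F₂ | i ∈ J}
  refine ⟨R₀, fun i => n i ∩ n' i, fun i hi => (Finset.mem_filter.1 hi).2,
    fun i => (n_open i).inter (n'_open i), fun i => ⟨mem_n i, mem_n' i⟩, fun d hd hdW => ?_⟩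
  obtain ⟨F₃, U, U_open, mem_U, hU⟩ := exists_open_box_subset
    ((isOpen_set_pi R₀.finite_toSet fun i _ => n'_open i).preimage Φ.symm.continuous)
    (f := Φ d) fun i hi => by simpa using (hd i hi).2
  obtain ⟨F₄, V, V_open, mem_V, hV⟩ := exists_open_box_piecewise_symm_mem Φ
    (N_open.preimage Φ.continuous) (a := slice Φ z o (Φ d o)) (by simpa using mem_N (Φ d o))
  let F : Finset I := insert o (F₁ ∪ F₂ ∪ F₃ ∪ F₄)
  refine ⟨{i ∈ F | i ∈ J}, {i ∈ F | i ∉ J}, by grind, by grind, by grind, ?_, M, U, V,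
    slice Φ z o y, ⟨M_open, fun i => (U_open i).mem_nhds (mem_U i), V_open, by simpa using mem_V,
      fun w hw x hx hxy => hn' fun i hi => ?_, fun w hw hM => hdW (hn fun i hi => ?_)⟩⟩
  · exact Set.disjoint_left.2 fun i hi => (Finset.mem_filter.1 hi).2
  · by_cases hiJ : i ∈ J
    · rw [hx i (by grind)]
      exact hU (fun j hj => hw j (by grind)) i (by grind)
    · rw [hxy i (by grind)]
      exact mem_n' i
  · by_cases hiJ : i ∈ J
    · simpa only [testPoint, Finset.piecewise_eq_of_mem _ _ _ (show i ∈ R₀ by grind)] using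
        (hd i (by grind)).1
    · have hmem := hMN _ (hV w (fun j hj => hw j (by grind)) _) hM i hi
      rw [Φ.symm_apply_apply, Finset.piecewise_eq_of_mem _ _ _ (by grind)] at hmem
      rwa [testPoint, Finset.piecewise_eq_of_notMem _ _ _ (show i ∉ R₀ by grind)]

variable (z o)

theorem exists_countable_forall_testPoint_mem (hb : ∀ i (y : Y i), HasCountableLocalPiBase y)
    {D : Finset I → Set (∀ i, X i)} (hD : ∀ R₀, (D R₀).Countable) :
    ∃ J : Set I, J.Countable ∧ ∀ (W : Set (Y o)), IsOpen W → ∀ y ∈ W,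
      ∃ (R₀ : Finset I) (v : ∀ i, Set (X i)), (R₀ : Set I) ⊆ J ∧ (∀ i, IsOpen (v i)) ∧
        (∀ i, slice Φ z o y i ∈ v i) ∧
        ∀ d ∈ D R₀, d ∈ (R₀ : Set I).pi v → Φ (testPoint Φ z o R₀ d) o ∈ W := by
  let P (R₀ R : Finset I) (d : ∀ i, X i) (E : Finset I) : Prop :=
    Disjoint E R ∧ ∃ M U V k, IsObstruction Φ o (Φ d) (Function.update z o (Φ d o))
      (slice Φ z o (Φ d o)) R₀ R E M U V k
  have hcover (R₀ R : Finset I) (d : ∀ i, X i) : ∃ A : Set I, A.Countable ∧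
      (R₀ ⊆ R → o ∈ R → ∀ E, P R₀ R d E → E.Nonempty → ∃ i ∈ E, i ∈ A) := by
    by_cases h : R₀ ⊆ R ∧ o ∈ R
    · obtain ⟨A, hA, hAE⟩ := exists_countable_inter_nonempty_of_countable_disjoint
        (P := P R₀ R d) fun S hS hdisj => countable_of_isObstruction hb
          (Function.update_self o _ z) h.1 h.2 hdisj (fun E hE => (hS E hE).1)
          fun E hE => (hS E hE).2
      exact ⟨A, hA, fun _ _ => hAE⟩
    · exact ⟨∅, countable_empty, fun h₁ h₂ => absurd ⟨h₁, h₂⟩ h⟩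
  choose A hA hAE using hcover
  obtain ⟨J, hJ, ho, hclosed⟩ := exists_countable_superset_closed_under
    (A := fun R => ⋃ R₀ ∈ R.powerset, ⋃ d ∈ D R₀, A R₀ R d)
    (fun R => R.powerset.countable_toSet.biUnion fun R₀ _ => (hD R₀).biUnion fun d _ => hA R₀ R d)
    (countable_singleton o)
  refine ⟨J, hJ, fun W hW y hy => ?_⟩
  obtain ⟨R₀, v, hR₀J, v_open, mem_v, hobs⟩ :=
    exists_isObstruction_of_testPoint_notMem Φ (z := z) (singleton_subset_iff.1 ho) hW hy
  refine ⟨R₀, v, hR₀J, v_open, mem_v, fun d hdD hdv => ?_⟩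
  by_contra hdW
  obtain ⟨R, E, hR₀R, hoR, hRJ, hEJ, M, U, V, k, h⟩ := hobs d hdv hdW
  have hER : Disjoint E R := Finset.disjoint_coe.1 (hEJ.mono_right hRJ)
  obtain ⟨i, hiE, hiA⟩ := hAE R₀ R d hR₀R hoR E ⟨hER, M, U, V, k, h⟩
    (h.nonempty (Function.update_self o _ z))
  refine Set.disjoint_left.1 hEJ hiE (hclosed R hRJ ?_)
  exact mem_biUnion (Finset.mem_powerset.2 hR₀R) (mem_biUnion hdD hiA)

end Slices

section Powers

variable {I : Type*}

theorem exists_countable_subseparable_slice {X : Type*} [TopologicalSpace X] [DecidableEq I]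
    (hb : ∀ x : X, HasCountableLocalPiBase x) (Φ : (I → X) ≃ₜ (I → X)) (z : I → X) (o : I)
    {G : Set X} (hG : Subseparable G) :
    ∃ J : Set I, J.Countable ∧ Subseparable (⋂ i ∈ J, (slice Φ z o · i) ⁻¹' G) := by
  obtain ⟨c, hc, hGc⟩ := hG
  have := hc.to_subtype
  let D (R₀ : Finset I) : Set (I → X) :=
    range fun a : R₀ → c => Function.extend Subtype.val (fun i => (a i : X)) z
  have hD (R₀ : Finset I) : (D R₀).Countable := countable_range _
  obtain ⟨J, hJ, happrox⟩ := exists_countable_forall_testPoint_mem Φ z o (fun _ => hb) hD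
  refine ⟨J, hJ, ⋃ R₀ ∈ {R₀ : Finset I | (R₀ : Set I) ⊆ J},
    (fun d => Φ (testPoint Φ z o R₀ d) o) '' D R₀,
    (countable_setOf_finset_coe_subset hJ).biUnion fun R₀ _ => (hD R₀).image _,
    fun y hy => mem_closure_iff.2 fun W hW hyW => ?_⟩
  obtain ⟨R₀, v, hR₀J, v_open, mem_v, hW⟩ := happrox W hW y hyW
  have hmeet (i : R₀) : ∃ x : c, (x : X) ∈ v i := by
    obtain ⟨x, hxv, hxc⟩ :=
      mem_closure_iff.1 (hGc (mem_iInter₂.1 hy i (hR₀J i.2))) (v i) (v_open i) (mem_v i)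
    exact ⟨⟨x, hxc⟩, hxv⟩
  choose a ha using hmeet
  have hd : Function.extend Subtype.val (fun i => (a i : X)) z ∈ (R₀ : Set I).pi v :=
    fun i hi => (Subtype.val_injective.extend_apply _ z ⟨i, hi⟩).symm ▸ ha ⟨i, hi⟩
  exact ⟨_, hW _ (mem_range_self a) hd, mem_biUnion hR₀J (mem_image_of_mem _ (mem_range_self a))⟩

theorem GcSet.biInter_preimage {X Y : Type*} [TopologicalSpace X] [TopologicalSpace Y]
    {G : Set X} (hG : GcSet ℵ₀ G) {J : Set I} (hJ : J.Countable) {f : I → Y → X}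
    (hf : ∀ i, Continuous (f i)) : GcSet ℵ₀ (⋂ i ∈ J, f i ⁻¹' G) := by
  obtain ⟨𝒰, hcard, hopen, hG_inter, hG_closure⟩ := hG
  refine ⟨image2 (fun i U => f i ⁻¹' U) J 𝒰, ?_, ?_, ?_, ?_⟩
  · exact le_aleph0_iff_set_countable.2 (hJ.image2 (le_aleph0_iff_set_countable.1 hcard) _)
  · exact forall_mem_image2.2 fun i _ U hU => (hopen U hU).preimage (hf i)
  · simp only [hG_inter, sInter_image2, preimage_sInter]
  · refine Subset.antisymm (fun y hy => ?_) fun y hy => ?_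
    · refine mem_iInter₂.2 (forall_mem_image2.2 fun i hi U hU => subset_closure ?_)
      have hyG := mem_iInter₂.1 hy i hi
      rw [hG_inter] at hyG
      exact hyG U hU
    · refine mem_iInter₂.2 fun i hi => ?_
      rw [hG_closure]
      exact mem_iInter₂.2 fun U hU => (hf i).closure_preimage_subset U
        (mem_iInter₂.1 hy _ (mem_image2_of_mem hi hU))

end Powers

/-- Lemma 4.4. -/
theorem stmt15 {X : Type u} [TopologicalSpace X] (hph : PowerHomogeneous X)
    (hpi : piChar X ≤ ℵ₀)
    (hex : ∃ G : Set X, G.Nonempty ∧ IsClosed G ∧ GcSet ℵ₀ G ∧ Subseparable G) :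
    ∀ x : X, ∃ G : Set X, x ∈ G ∧ IsClosed G ∧ GcSet ℵ₀ G ∧ Subseparable G := by
  classical
  intro x
  obtain ⟨I, ⟨o⟩, hhom⟩ := hph
  obtain ⟨G, ⟨p, hp⟩, hclosed, hGc, hsub⟩ := hex
  obtain ⟨Φ, hΦ⟩ := hhom (fun _ => p) fun _ => x
  obtain ⟨J, hJ, hsubJ⟩ := exists_countable_subseparable_slice
    (hasCountableLocalPiBase_of_piChar_le_aleph0 hpi) Φ (fun _ => x) o hsub
  have hcont (i : I) : Continuous fun y => slice Φ (fun _ => x) o y i :=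
    (continuous_apply i).comp (continuous_slice Φ _ o)
  have hx : slice Φ (fun _ => x) o x = fun _ => p := by
    rw [slice, Function.update_eq_self_iff.2 rfl, ← hΦ, Φ.symm_apply_apply]
  refine ⟨⋂ i ∈ J, (slice Φ (fun _ => x) o · i) ⁻¹' G, ?_,
    isClosed_biInter fun i _ => hclosed.preimage (hcont i), hGc.biInter_preimage hJ hcont, hsubJ⟩
  exact mem_iInter₂.2 fun i _ => by simpa only [mem_preimage, hx] using hp
end

section
/- Let X be a power homogeneous compactum admitting a countable cover 𝒞 such that each C ∈ 𝒞 is countably tight and dense in X. Then |X| ≤ 𝔠. -/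
open Cardinal Set TopologicalSpace

universe u

/-!
Let `𝒞` be a countable cover of the compactum `X` by dense, countably tight sets. Were there an
independent family of `ω₁` pairs of closed sets, one could use free sequences to shrink the region
carrying such a family so as to miss the members of `𝒞` one after the other, and end up with a
point outside all of them. The absence of such families has two consequences: some point of `X` has
a countable local π-base (as in Shapirovskii's theorem), and the value at a point `p` of a
continuous map from a power of `X` to `X` depends on only countably many coordinates of `p`.

Homogeneity of a power of `X` then does two things. It transports the countable π-base to all
points, with enough uniformity that points of `X` are separated by sequences from any given dense
set; hence it suffices to find a dense set of size at most `𝔠`. It also transports a nonempty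
subseparable closed `Gδ` set, which exists because otherwise one could construct a free sequence of
length `ω₁` in `X`, to every point of `X`. Finally, a set `Y` of size at most `𝔠`, closed off
suitably, is dense: its closure is covered by the `Gδ` sets around its own points, so a point
outside it would be missed by a finite cover of `Y`, contrary to the way `Y` was closed off.
-/

/-- The countable ordinals, as a well-ordered type: the index set of all transfinite
constructions and of all uncountable families below. -/
abbrev CountableOrdinal : Type := (ℵ₁ : Cardinal.{0}).ord.ToType

namespace CountableOrdinal

theorem mk_eq : #CountableOrdinal = ℵ₁ := by simp

instance uncountable : Uncountable CountableOrdinal := by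
  rw [← aleph0_lt_mk_iff, mk_eq, ← aleph_one_le_iff]

theorem countable_Iio (a : CountableOrdinal) : (Iio a).Countable := by
  rw [← le_aleph0_iff_set_countable, ← lt_aleph_one_iff]
  simpa using mk_Iio_lt a (by simp)

theorem exists_forall_lt {s : Set CountableOrdinal} (hs : s.Countable) : ∃ a, ∀ b ∈ s, b < a := by
  by_contra! h
  have hcover : (univ : Set CountableOrdinal) ⊆ ⋃ b ∈ s, insert b (Iio b) := fun a _ => by
    obtain ⟨b, hb, hab⟩ := h a
    exact mem_biUnion hb (by simpa [Iio_insert] using hab)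
  exact not_countable_univ ((hs.biUnion fun b _ => (countable_Iio b).insert b).mono hcover)

theorem exists_subset_biUnion_Iio {α : Type*} {T : CountableOrdinal → Set α} {B : Set α}
    (hB : B.Countable) (hBT : B ⊆ ⋃ a, T a) : ∃ a, B ⊆ ⋃ b ∈ Iio a, T b := by
  choose! r hr using fun x (hx : x ∈ B) => mem_iUnion.1 (hBT hx)
  obtain ⟨a, ha⟩ := exists_forall_lt (hB.image r)
  exact ⟨a, fun x hx => mem_biUnion (ha _ (mem_image_of_mem r hx)) (hr x hx)⟩

theorem nonempty_embedding (ι : Type*) [Uncountable ι] : Nonempty (CountableOrdinal ↪ ι) := by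
  rw [← lift_mk_le', mk_eq, lift_aleph, Ordinal.lift_one, aleph_one_le_iff, aleph0_lt_lift]
  exact aleph0_lt_mk

end CountableOrdinal

theorem exists_forall_image_Iio {ι β : Type*} [Preorder ι] [WellFoundedLT ι] [Nonempty β]
    (Good : Set β → β → Prop)
    (step : ∀ (F : ι → β) (a : ι), (∀ b < a, Good (F '' Iio b) (F b)) →
      ∃ y, Good (F '' Iio a) y) :
    ∃ F : ι → β, ∀ a, Good (F '' Iio a) (F a) := by
  let F : ι → β := WellFounded.fix wellFounded_lt fun a ih =>
    Classical.epsilon (Good {y | ∃ b, ∃ h : b < a, ih b h = y})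
  have hF : ∀ a, F a = Classical.epsilon (Good (F '' Iio a)) := fun a => by
    have himage : {y | ∃ b, ∃ _ : b < a, F b = y} = F '' Iio a := by ext y; simp
    rw [← himage]
    exact WellFounded.fix_eq _ _ a
  refine ⟨F, fun a => ?_⟩
  induction a using WellFoundedLT.induction with
  | ind a ih =>
    rw [hF a]
    exact Classical.epsilon_spec (step F a ih)

theorem countable_setOf_finset_subset {T : Type*} {s : Set T} (hs : s.Countable) :
    {G : Finset T | (G : Set T) ⊆ s}.Countable := by
  refine ((countable_ofPred_finite_subset hs).preimage
    (f := fun G : Finset T => (G : Set T)) Finset.coe_injective).mono fun G hG => ?_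
  exact mem_preimage.2 ⟨G.finite_toSet, hG⟩

theorem exists_countable_superset_forall_finset {T : Type*} {op : Finset T → Set T}
    (hop : ∀ G, (op G).Countable) {s : Set T} (hs : s.Countable) :
    ∃ S : Set T, S.Countable ∧ s ⊆ S ∧ ∀ G : Finset T, (G : Set T) ⊆ S → op G ⊆ S := by
  let next : Set T → Set T := fun S => S ∪ ⋃ G ∈ {G : Finset T | (G : Set T) ⊆ S}, op G
  let A : ℕ → Set T := fun n => next^[n] s
  have hA : ∀ n, A (n + 1) = next (A n) := fun n => Function.iterate_succ_apply' _ _ _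
  have hmono : Monotone A := monotone_nat_of_le_succ fun n => by
    rw [hA]; exact subset_union_left
  have hcount : ∀ n, (A n).Countable := by
    intro n
    induction n with
    | zero => exact hs
    | succ n ih =>
      rw [hA]
      exact ih.union ((countable_setOf_finset_subset ih).biUnion fun G _ => hop G)
  refine ⟨⋃ n, A n, countable_iUnion hcount, subset_iUnion A 0, fun G hG => ?_⟩
  obtain ⟨n, hn⟩ := hmono.directed_le.exists_mem_subset_of_finset_subset_biUnion hG
  refine subset_trans ?_ (subset_iUnion A (n + 1))
  rw [hA]
  exact subset_union_of_subset_right (subset_biUnion_of_mem (u := op) hn) _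

theorem exists_countable_mem_forall_subset {T : Type*} {op : T → Set T}
    (hop : ∀ y, (op y).Countable) (x : T) :
    ∃ S : Set T, S.Countable ∧ x ∈ S ∧ ∀ y ∈ S, op y ⊆ S := by
  obtain ⟨S, hSc, hxS, hS⟩ := exists_countable_superset_forall_finset
    (op := fun G => ⋃ y ∈ G, op y) (fun G => G.countable_toSet.biUnion fun y _ => hop y)
    (countable_singleton x)
  refine ⟨S, hSc, hxS rfl, fun y hy => ?_⟩
  simpa using hS {y} (by simpa using hy)

universe v

theorem mk_iUnion_le_continuum {α : Type u} {ι : Type v} {f : ι → Set α} (hι : #ι ≤ 𝔠)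
    (hf : ∀ i, #(f i) ≤ 𝔠) : #(⋃ i, f i) ≤ 𝔠 := by
  rw [← lift_le.{v}, lift_continuum]
  refine (mk_iUnion_le_lift f).trans ?_
  rw [← continuum_mul_self]
  exact mul_le_mul' (by simpa using hι) (ciSup_le' fun i => by simpa using hf i)

theorem mk_biUnion_le_continuum {α : Type u} {ι : Type v} {s : Set ι} {f : ι → Set α}
    (hs : #s ≤ 𝔠) (hf : ∀ i ∈ s, #(f i) ≤ 𝔠) : #(⋃ i ∈ s, f i) ≤ 𝔠 := by
  rw [biUnion_eq_iUnion]
  exact mk_iUnion_le_continuum hs fun i => hf i i.2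

theorem mk_le_continuum_of_countable {α : Type u} {s : Set α} (hs : s.Countable) : #s ≤ 𝔠 :=
  hs.le_aleph0.trans aleph0_le_continuum

theorem mk_arrow_le_continuum {ι : Type v} [Countable ι] {α : Type u} (hα : #α ≤ 𝔠) :
    #(ι → α) ≤ 𝔠 := by
  rw [mk_arrow]
  calc lift.{v} #α ^ lift.{u} #ι
    _ ≤ 𝔠 ^ lift.{u} #ι := power_le_power_right (by simpa using hα)
    _ ≤ 𝔠 ^ ℵ₀ := power_le_power_left continuum_ne_zero (by simp)
    _ = 𝔠 := continuum_power_aleph0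

theorem mk_setOf_countable_subset_le_continuum {α : Type u} {s : Set α} (hs : #s ≤ 𝔠) :
    #{B : Set α | B ⊆ s ∧ B.Countable} ≤ 𝔠 :=
  calc #{B : Set α | B ⊆ s ∧ B.Countable}
    _ ≤ #{B : Set α // B ⊆ s ∧ #B ≤ ℵ₀} := by simp only [le_aleph0_iff_set_countable]; rfl
    _ ≤ max #s ℵ₀ ^ ℵ₀ := mk_bounded_subset_le s ℵ₀
    _ ≤ 𝔠 ^ ℵ₀ := power_le_power_right (max_le hs aleph0_le_continuum)
    _ = 𝔠 := continuum_power_aleph0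

theorem exists_mk_le_continuum_forall_countable_subset {T : Type u} {φ : Set T → Set T}
    (hφ : ∀ B : Set T, B.Countable → #(φ B) ≤ 𝔠) :
    ∃ Y : Set T, #Y ≤ 𝔠 ∧ ∀ B ⊆ Y, B.Countable → φ B ⊆ Y := by
  obtain ⟨F, hF⟩ := exists_forall_image_Iio (ι := CountableOrdinal)
    (fun 𝒮 S => S = ⋃ B ∈ {B : Set T | B ⊆ ⋃₀ 𝒮 ∧ B.Countable}, φ B) fun _ _ _ => ⟨_, rfl⟩
  simp only [sUnion_image] at hF
  have hcard : ∀ a, #(F a) ≤ 𝔠 := by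
    intro a
    induction a using WellFoundedLT.induction with
    | ind a ih =>
      rw [hF]
      have hbelow : #(⋃ b ∈ Iio a, F b) ≤ 𝔠 := mk_biUnion_le_continuum
        (mk_le_continuum_of_countable (CountableOrdinal.countable_Iio a)) ih
      exact mk_biUnion_le_continuum (mk_setOf_countable_subset_le_continuum hbelow)
        fun B hB => hφ B hB.2
  refine ⟨⋃ a, F a, mk_iUnion_le_continuum ?_ hcard, fun B hB hBc => ?_⟩
  · rw [CountableOrdinal.mk_eq]
    exact aleph_one_le_continuum
  · obtain ⟨a, ha⟩ := CountableOrdinal.exists_subset_biUnion_Iio hBc hB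
    refine subset_trans ?_ (subset_iUnion F a)
    rw [hF]
    exact subset_biUnion_of_mem (u := φ) ⟨ha, hBc⟩

section Tightness

variable {X : Type u} [TopologicalSpace X] {𝒞 : Set (Set X)}

theorem exists_countable_mem_closure_of_tightness_le {C A : Set X} (hC : tightness ↥C ≤ ℵ₀)
    (hA : A ⊆ C) {x : X} (hx : x ∈ C) (hxA : x ∈ closure A) :
    ∃ B ⊆ A, B.Countable ∧ x ∈ closure B := by
  have hne : {κ : Cardinal.{u} | ℵ₀ ≤ κ ∧ ∀ (A : Set C) (x : C), x ∈ closure A →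
      ∃ B ⊆ A, #B ≤ κ ∧ x ∈ closure B}.Nonempty :=
    ⟨max ℵ₀ #C, le_max_left _ _, fun A x hx =>
      ⟨A, Subset.rfl, (mk_set_le A).trans (le_max_right _ _), hx⟩⟩
  obtain ⟨-, ht⟩ := csInf_mem hne
  obtain ⟨B, hBA, hB, hxB⟩ := ht (Subtype.val ⁻¹' A) ⟨x, hx⟩ (by
    rw [closure_subtype, Subtype.image_preimage_coe, inter_eq_right.2 hA]
    exact hxA)
  refine ⟨Subtype.val '' B, image_subset_iff.2 hBA, ?_, closure_subtype.1 hxB⟩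
  exact (le_aleph0_iff_set_countable.1 (hB.trans hC)).image _

theorem Saturated.exists_countable_mem_closure {S : Set X} (hS : Saturated 𝒞 S)
    (hcov : ⋃₀ 𝒞 = Set.univ) (ht : ∀ C ∈ 𝒞, tightness ↥C ≤ ℵ₀) {z : X} (hz : z ∈ closure S) :
    ∃ B ⊆ S, B.Countable ∧ z ∈ closure B := by
  obtain ⟨C, hC, hzC⟩ := mem_sUnion.1 (hcov.ge (mem_univ z))
  obtain ⟨B, hB, hBc, hzB⟩ := exists_countable_mem_closure_of_tightness_le (ht C hC)
    inter_subset_right hzC (closure_minimal (hS C hC) isClosed_closure hz)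
  exact ⟨B, hB.trans inter_subset_left, hBc, hzB⟩

theorem Saturated.biUnion {ι : Type*} {s : Set ι} {S : ι → Set X}
    (hS : ∀ i ∈ s, Saturated 𝒞 (S i)) : Saturated 𝒞 (⋃ i ∈ s, S i) := fun C hC =>
  iUnion₂_subset fun i hi => (hS i hi C hC).trans <|
    closure_mono <| inter_subset_inter_left C <| subset_biUnion_of_mem hi

end Tightness

section Independence

variable {X : Type u} [TopologicalSpace X]

theorem exists_forall_isClosed_mem_of_eventually [CompactSpace X] {ι : Type*} {l : Filter ι}
    [l.NeBot] (x : ι → X) : ∃ z, ∀ T, IsClosed T → (∀ᶠ a in l, x a ∈ T) → z ∈ T := by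
  obtain ⟨z, hz⟩ := exists_clusterPt_of_compactSpace (Filter.map x l)
  refine ⟨z, fun T hT hxT => ?_⟩
  rw [← hT.closure_eq, mem_closure_iff_clusterPt]
  exact hz.mono (Filter.le_principal_iff.2 hxT)

/-- A family of disjoint pairs `W i true`, `W i false` of closed sets is *independent on* `H`
if every choice of one member from each pair is realised by a point of `H`. -/
structure IsIndependentOn {ι : Type*} (W : ι → Bool → Set X) (H : Set X) : Prop where
  isClosed : ∀ i b, IsClosed (W i b)
  disjoint : ∀ i, Disjoint (W i true) (W i false)
  nonempty : ∀ σ : ι → Bool, (H ∩ ⋂ i, W i (σ i)).Nonempty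

namespace IsIndependentOn

variable {ι κ : Type*} {H : Set X}

theorem comp {W : κ → Bool → Set X} (hW : IsIndependentOn W H) (g : ι ↪ κ) :
    IsIndependentOn (fun i => W (g i)) H where
  isClosed i := hW.isClosed (g i)
  disjoint i := hW.disjoint (g i)
  nonempty σ := by
    refine (hW.nonempty (Function.extend g σ fun _ => true)).mono
      (inter_subset_inter_right H fun x hx => mem_iInter.2 fun i => ?_)
    simpa only [g.injective.extend_apply] using mem_iInter.1 hx (g i)

theorem inr {W : ι ⊕ κ → Bool → Set X} (hW : IsIndependentOn W H) (σ : ι → Bool) :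
    IsIndependentOn (fun k => W (.inr k)) (H ∩ ⋂ i, W (.inl i) (σ i)) where
  isClosed k := hW.isClosed (.inr k)
  disjoint k := hW.disjoint (.inr k)
  nonempty τ := by
    simpa [iInter_sum, inter_assoc] using hW.nonempty (Sum.elim σ τ)

end IsIndependentOn

/-- Some family of pairs indexed by the countable ordinals is independent on `H`. For a closed
subset `H` of a compact space this says that a closed subset of `H` maps onto the Cantor cube
`2 ^ ω₁`. -/
def HasUncountableIndependentFamily (H : Set X) : Prop :=
  ∃ W : CountableOrdinal → Bool → Set X, IsIndependentOn W H

section FreeSequence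

variable {W : CountableOrdinal → Bool → Set X} {T : CountableOrdinal → Set X}

theorem disjoint_closure_iUnion_inter_iInter {C : Set X} (hC : tightness ↥C ≤ ℵ₀)
    (hWc : ∀ b, IsClosed (W b false)) (hWd : ∀ b, Disjoint (W b true) (W b false))
    (hTC : ∀ a, T a ⊆ C) (hTW : ∀ a, T a ⊆ ⋂ b, W b (decide (b < a))) :
    Disjoint (closure (⋃ a, T a) ∩ ⋂ b, W b true) C := by
  rw [disjoint_left]
  rintro z ⟨hzT, hzW⟩ hzC
  obtain ⟨B, hBT, hB, hzB⟩ :=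
    exists_countable_mem_closure_of_tightness_le hC (iUnion_subset hTC) hzC hzT
  obtain ⟨a, ha⟩ := CountableOrdinal.exists_subset_biUnion_Iio hB hBT
  refine disjoint_left.1 (hWd a) (mem_iInter.1 hzW a) (closure_minimal ?_ (hWc a) hzB)
  refine ha.trans (iUnion₂_subset fun b hb => (hTW b).trans ?_)
  simpa [(mem_Iio.1 hb).not_gt] using iInter_subset (fun c => W c (decide (c < b))) a

theorem nonempty_closure_iUnion_inter_iInter [CompactSpace X] {L : Set X} (hL : IsClosed L)
    (hWc : ∀ b, IsClosed (W b true)) (hTW : ∀ a, T a ⊆ ⋂ b, W b (decide (b < a)))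
    (hTL : ∀ a, (T a ∩ L).Nonempty) : ((closure (⋃ a, T a) ∩ ⋂ b, W b true) ∩ L).Nonempty := by
  choose x hxT hxL using hTL
  obtain ⟨z, hz⟩ := exists_forall_isClosed_mem_of_eventually (l := Filter.atTop) x
  refine ⟨z, ⟨hz _ isClosed_closure (.of_forall fun a => ?_), mem_iInter.2 fun b => ?_⟩,
    hz L hL (.of_forall hxL)⟩
  · exact subset_closure (mem_iUnion_of_mem a (hxT a))
  · obtain ⟨b', hb'⟩ := CountableOrdinal.exists_forall_lt (countable_singleton b)
    refine hz _ (hWc b) ?_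
    filter_upwards [Filter.eventually_ge_atTop b'] with a ha
    simpa [(hb' b rfl).trans_le ha] using mem_iInter.1 (hTW a (hxT a)) b

end FreeSequence

theorem HasUncountableIndependentFamily.exists_subset_disjoint [CompactSpace X] {H C : Set X}
    (hind : HasUncountableIndependentFamily H) (hH : IsClosed H) (hC : tightness ↥C ≤ ℵ₀) :
    ∃ H' ⊆ H, IsClosed H' ∧ HasUncountableIndependentFamily H' ∧ Disjoint H' C := by
  -- The first block of pairs cuts out a free sequence of sets `S a`. If some `S a ∩ L τ` misses
  -- `C`, the third block is still independent on it. Otherwise the limit points of the sets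
  -- `S a ∩ C` realise every choice `τ` from the second block, and countable tightness keeps them
  -- outside `C`.
  obtain ⟨W₀, hW₀⟩ := hind
  obtain ⟨e⟩ : Nonempty (CountableOrdinal ⊕ CountableOrdinal ⊕ CountableOrdinal ↪
      CountableOrdinal) := by
    rw [← Cardinal.le_def]
    simp [add_eq_self (aleph0_le_aleph 1)]
  have hW := hW₀.comp e
  set W := fun i => W₀ (e i)
  let S : CountableOrdinal → Set X := fun a => H ∩ ⋂ b, W (.inl b) (decide (b < a))
  let L : (CountableOrdinal → Bool) → Set X := fun τ => ⋂ i, W (.inr (.inl i)) (τ i)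
  have hL : ∀ τ, IsClosed (L τ) := fun τ => isClosed_iInter fun i => hW.isClosed _ _
  by_cases hcase : ∃ a τ, Disjoint (S a ∩ L τ) C
  · obtain ⟨a, τ, hdisj⟩ := hcase
    refine ⟨S a ∩ L τ, inter_subset_left.trans inter_subset_left, ?_,
      ⟨_, (hW.inr fun b => decide (b < a)).inr τ⟩, hdisj⟩
    exact (hH.inter (isClosed_iInter fun b => hW.isClosed _ _)).inter (hL τ)
  · have hmeet : ∀ τ a, ((S a ∩ C) ∩ L τ).Nonempty := fun τ a => by
      rw [inter_right_comm, ← not_disjoint_iff_nonempty_inter]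
      exact fun h => hcase ⟨a, τ, h⟩
    have hTW : ∀ a, S a ∩ C ⊆ ⋂ b, W (.inl b) (decide (b < a)) := fun a =>
      inter_subset_left.trans inter_subset_right
    refine ⟨closure (⋃ a, S a ∩ C) ∩ ⋂ b, W (.inl b) true, ?_, ?_,
      ⟨fun i => W (.inr (.inl i)), fun i => hW.isClosed _, fun i => hW.disjoint _, fun τ => ?_⟩, ?_⟩
    · exact inter_subset_left.trans <| closure_minimal
        (iUnion_subset fun a => inter_subset_left.trans inter_subset_left) hH
    · exact isClosed_closure.inter (isClosed_iInter fun b => hW.isClosed _ _)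
    · exact nonempty_closure_iUnion_inter_iInter (hL τ) (fun b => hW.isClosed _ _) hTW (hmeet τ)
    · exact disjoint_closure_iUnion_inter_iInter hC (fun b => hW.isClosed _ _)
        (fun b => hW.disjoint _) (fun a => inter_subset_right) hTW

theorem HasUncountableIndependentFamily.nonempty {H : Set X}
    (hind : HasUncountableIndependentFamily H) : H.Nonempty := by
  obtain ⟨W, hW⟩ := hind
  exact (hW.nonempty fun _ => true).mono inter_subset_left

theorem not_hasUncountableIndependentFamily_univ [CompactSpace X] {𝒞 : Set (Set X)}
    (h𝒞 : 𝒞.Countable) (hcov : ⋃₀ 𝒞 = Set.univ) (ht : ∀ C ∈ 𝒞, tightness ↥C ≤ ℵ₀) :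
    ¬ HasUncountableIndependentFamily (Set.univ : Set X) := by
  intro hind
  obtain ⟨x₀, -⟩ := hind.nonempty
  obtain ⟨C₀, hC₀, -⟩ := mem_sUnion.1 (hcov.ge (mem_univ x₀))
  obtain ⟨c, rfl⟩ := h𝒞.exists_eq_range ⟨C₀, hC₀⟩
  let State := {H : Set X // IsClosed H ∧ HasUncountableIndependentFamily H}
  have step : ∀ (n : ℕ) (H : State), ∃ H' : State, H'.1 ⊆ H.1 ∧ Disjoint H'.1 (c n) := by
    rintro n ⟨H, hH, hind⟩
    obtain ⟨H', hsub, hH', hind', hd⟩ := hind.exists_subset_disjoint hH (ht _ (mem_range_self n))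
    exact ⟨⟨H', hH', hind'⟩, hsub, hd⟩
  choose next hsub hdisj using step
  let H : ℕ → State := Nat.rec ⟨Set.univ, isClosed_univ, hind⟩ next
  obtain ⟨x, hx⟩ := IsCompact.nonempty_iInter_of_sequence_nonempty_isCompact_isClosed
    (fun n => (H n).1) (fun n => hsub n (H n)) (fun n => (H n).2.2.nonempty)
    (H 0).2.1.isCompact fun n => (H n).2.1
  obtain ⟨_, ⟨n, rfl⟩, hn⟩ := mem_sUnion.1 (hcov.ge (mem_univ x))
  exact disjoint_left.1 (hdisj n (H n)) (mem_iInter.1 hx (n + 1)) hn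

theorem hasUncountableIndependentFamily_univ_of_finset [CompactSpace X] {ι : Type*}
    [Uncountable ι] {U : ι → Bool → Set X}
    (hd : ∀ i, Disjoint (closure (U i true)) (closure (U i false)))
    (hU : ∀ (E : Finset ι) (σ : ι → Bool), (⋂ i ∈ E, U i (σ i)).Nonempty) :
    HasUncountableIndependentFamily (Set.univ : Set X) := by
  obtain ⟨g⟩ := CountableOrdinal.nonempty_embedding ι
  have hind : IsIndependentOn (fun i b => closure (U i b)) Set.univ := by
    refine ⟨fun i b => isClosed_closure, hd, fun σ => ?_⟩
    rw [univ_inter]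
    exact CompactSpace.iInter_nonempty (fun i => isClosed_closure) fun E =>
      (hU E σ).mono (iInter₂_mono fun i _ => subset_closure)
  exact ⟨_, hind.comp g⟩

end Independence

section PiBase

variable {X : Type u}

/-- The sets cut out of `V` by choosing one member from each of finitely many pairs in `𝒬`. -/
def finiteTraces (V : Set X) (𝒬 : Set (Bool → Set X)) : Set (Set X) :=
  {T | ∃ (E : Finset (Bool → Set X)) (σ : (Bool → Set X) → Bool),
    (E : Set (Bool → Set X)) ⊆ 𝒬 ∧ V ∩ ⋂ π ∈ E, π (σ π) = T}

theorem countable_finiteTraces (V : Set X) {𝒬 : Set (Bool → Set X)} (h𝒬 : 𝒬.Countable) :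
    (finiteTraces V 𝒬).Countable := by
  refine ((countable_ofPred_finite_subset (h𝒬.prod countable_univ)).image
    fun F : Set ((Bool → Set X) × Bool) => V ∩ ⋂ q ∈ F, q.1 q.2).mono ?_
  rintro _ ⟨E, σ, hE, rfl⟩
  refine ⟨(fun π => (π, σ π)) '' E, ⟨E.finite_toSet.image _, ?_⟩, by simp⟩
  rintro _ ⟨π, hπ, rfl⟩
  exact ⟨hE hπ, mem_univ _⟩

theorem exists_forall_subset_inter_nonempty_of_finset_cover {ι : Type*} {𝒱 : Set (Set X)}
    (h𝒱 : 𝒱.Nonempty) (hne : ∀ V ∈ 𝒱, V.Nonempty) {t : Finset ι} {T : ι → Set X}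
    (hT : ⋃ i ∈ t, T i = Set.univ) :
    ∃ V ∈ 𝒱, ∃ i, ∀ V' ∈ 𝒱, V' ⊆ V → (V' ∩ T i).Nonempty := by
  classical
  obtain ⟨V, hV, hmin⟩ := exists_minimalFor_of_wellFoundedLT (· ∈ 𝒱)
    (fun V => {i ∈ t | (V ∩ T i).Nonempty}) h𝒱
  obtain ⟨y, hyV⟩ := hne V hV
  obtain ⟨i, hit, hyi⟩ := mem_iUnion₂.1 (hT.ge (mem_univ y))
  refine ⟨V, hV, i, fun V' hV' hV'V => ?_⟩
  have hle := hmin hV' (Finset.monotone_filter_right t fun j _ hj =>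
    hj.mono (inter_subset_inter_left _ hV'V))
  exact (Finset.mem_filter.1 (hle (Finset.mem_filter.2 ⟨hit, y, hyV, hyi⟩))).2

variable [TopologicalSpace X]

theorem piCharPt_le_aleph0_iff {x : X} :
    piCharPt x ≤ ℵ₀ ↔ ∃ ℬ : Set (Set X), ℬ.Countable ∧ (∀ B ∈ ℬ, IsOpen B ∧ B.Nonempty) ∧
      ∀ U, IsOpen U → x ∈ U → ∃ B ∈ ℬ, B ⊆ U := by
  constructor
  · intro hx
    have hne : {κ : Cardinal.{u} | ∃ ℬ : Set (Set X), #ℬ ≤ κ ∧ (∀ B ∈ ℬ, IsOpen B ∧ B.Nonempty) ∧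
        ∀ U : Set X, IsOpen U → x ∈ U → ∃ B ∈ ℬ, B ⊆ U}.Nonempty :=
      ⟨_, {B | IsOpen B ∧ B.Nonempty}, le_rfl, fun B hB => hB, fun U hU hxU =>
        ⟨U, ⟨hU, x, hxU⟩, Subset.rfl⟩⟩
    obtain ⟨ℬ, hℬ, hopen, hbase⟩ := csInf_mem hne
    exact ⟨ℬ, le_aleph0_iff_set_countable.1 (hℬ.trans hx), hopen, hbase⟩
  · rintro ⟨ℬ, hℬ, hopen, hbase⟩
    exact csInf_le' ⟨ℬ, hℬ.le_aleph0, hopen, hbase⟩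

/-- A pair `π true`, `π false` of open sets with disjoint closures. -/
structure IsSeparatedPair (π : Bool → Set X) : Prop where
  isOpen : ∀ b, IsOpen (π b)
  disjoint : Disjoint (closure (π true)) (closure (π false))

/-- A family of separated pairs all of whose finite traces on `V` are nonempty; this is a local
form of independence, used for nonempty open sets `V`. -/
structure IsIndependentBelow (V : Set X) (𝒬 : Set (Bool → Set X)) : Prop where
  isSeparatedPair : ∀ π ∈ 𝒬, IsSeparatedPair π
  nonempty : ∀ T ∈ finiteTraces V 𝒬, T.Nonempty

namespace IsIndependentBelow

variable {V : Set X} {𝒬 : Set (Bool → Set X)}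

theorem isOpen_of_mem_finiteTraces (h : IsIndependentBelow V 𝒬) (hV : IsOpen V) {T : Set X}
    (hT : T ∈ finiteTraces V 𝒬) : IsOpen T := by
  obtain ⟨E, σ, hE, rfl⟩ := hT
  exact hV.inter (isOpen_biInter_finset fun π hπ => (h.isSeparatedPair π (hE hπ)).isOpen _)

theorem countable [CompactSpace X] (hX : ¬ HasUncountableIndependentFamily (Set.univ : Set X))
    (h : IsIndependentBelow V 𝒬) : 𝒬.Countable := by
  by_contra hunc
  have : Uncountable 𝒬 := by rwa [← not_countable_iff, countable_coe_iff]
  refine hX (hasUncountableIndependentFamily_univ_of_finset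
    (fun π : 𝒬 => (h.isSeparatedPair π π.2).disjoint) fun E σ => ?_)
  refine (h.nonempty _ ⟨E.map (Function.Embedding.subtype _),
    Function.extend Subtype.val σ fun _ => true, by simp, rfl⟩).mono ?_
  rintro x ⟨-, hx⟩
  refine mem_iInter₂.2 fun π hπ => ?_
  have hxπ := mem_iInter₂.1 hx π.1 (Finset.mem_map_of_mem (Function.Embedding.subtype _) hπ)
  rwa [Subtype.val_injective.extend_apply] at hxπ

theorem insert {ρ : Bool → Set X} (h : IsIndependentBelow V 𝒬) (hρ : IsSeparatedPair ρ)
    (hne : ∀ T ∈ finiteTraces V 𝒬, ∀ b, (T ∩ ρ b).Nonempty) :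
    IsIndependentBelow V (insert ρ 𝒬) := by
  classical
  refine ⟨forall_mem_insert.2 ⟨hρ, h.isSeparatedPair⟩, ?_⟩
  rintro _ ⟨E, σ, hE, rfl⟩
  have hE' : ((E.erase ρ : Finset _) : Set (Bool → Set X)) ⊆ 𝒬 := by
    rwa [Finset.coe_erase, sdiff_singleton_subset_iff]
  refine (hne _ ⟨_, σ, hE', rfl⟩ (σ ρ)).mono ?_
  rintro y ⟨⟨hyV, hyE⟩, hyρ⟩
  refine ⟨hyV, mem_iInter₂.2 fun π hπ => ?_⟩
  by_cases hπρ : π = ρ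
  · rwa [hπρ]
  · exact mem_iInter₂.1 hyE π (Finset.mem_erase.2 ⟨hπρ, hπ⟩)

end IsIndependentBelow

theorem exists_maximal_isIndependentBelow {V : Set X} (hV : V.Nonempty) :
    ∃ 𝒬, Maximal (IsIndependentBelow V) 𝒬 := by
  have hempty : IsIndependentBelow V ∅ := by
    refine ⟨by simp, ?_⟩
    rintro _ ⟨E, σ, hE, rfl⟩
    obtain rfl : E = ∅ := by simpa [subset_empty_iff] using hE
    simpa using hV
  have hchain : ∀ c ⊆ {𝒬 | IsIndependentBelow V 𝒬}, IsChain (· ⊆ ·) c → c.Nonempty →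
      ∃ ub ∈ {𝒬 | IsIndependentBelow V 𝒬}, ∀ 𝒬 ∈ c, 𝒬 ⊆ ub := by
    refine fun c hc hchain hne => ⟨⋃₀ c, ⟨?_, ?_⟩, fun 𝒬 h𝒬 => subset_sUnion_of_mem h𝒬⟩
    · rintro π ⟨𝒬, h𝒬, hπ⟩
      exact (hc h𝒬).isSeparatedPair π hπ
    · rintro T ⟨E, σ, hE, hT⟩
      rw [sUnion_eq_biUnion] at hE
      obtain ⟨𝒬, h𝒬, hE𝒬⟩ := hchain.directedOn.exists_mem_subset_of_finset_subset_biUnion hne hE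
      exact (hc h𝒬).nonempty T ⟨E, σ, hE𝒬, hT⟩
  obtain ⟨𝒬, -, h𝒬⟩ := zorn_subset_nonempty _ hchain ∅ hempty
  exact ⟨𝒬, h𝒬⟩

theorem exists_inter_eq_empty_of_maximal_isIndependentBelow {V : Set X}
    {𝒬 : Set (Bool → Set X)} (h𝒬 : Maximal (IsIndependentBelow V) 𝒬) {ρ : Bool → Set X}
    (hρ : IsSeparatedPair ρ) : ∃ T ∈ finiteTraces V 𝒬, ∃ b, T ∩ ρ b = ∅ := by
  by_contra! hne
  have hmem : ρ ∈ 𝒬 := h𝒬.le_of_ge (h𝒬.prop.insert hρ hne) (subset_insert _ _) (mem_insert _ _)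
  obtain ⟨y, ⟨-, hyf⟩, hyt⟩ := hne _ ⟨{ρ}, fun _ => false, by simpa using hmem, rfl⟩ true
  rw [Finset.set_biInter_singleton] at hyf
  exact disjoint_left.1 hρ.disjoint (subset_closure hyt) (subset_closure hyf)

theorem exists_countable_forall_finiteTraces_subset [CompactSpace X] [Nonempty X]
    (hX : ¬ HasUncountableIndependentFamily (Set.univ : Set X)) :
    ∃ 𝒱 : Set (Set X), 𝒱.Countable ∧ 𝒱.Nonempty ∧ ∀ V ∈ 𝒱, IsOpen V ∧ V.Nonempty ∧
      ∃ 𝒬, Maximal (IsIndependentBelow V) 𝒬 ∧ finiteTraces V 𝒬 ⊆ 𝒱 := by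
  choose! 𝒬 h𝒬 using fun (V : Set X) (hV : V.Nonempty) => exists_maximal_isIndependentBelow hV
  have hop : ∀ V : Set X, {T | V.Nonempty ∧ T ∈ finiteTraces V (𝒬 V)}.Countable := fun V => by
    by_cases hV : V.Nonempty
    · simpa [hV] using countable_finiteTraces V ((h𝒬 V hV).prop.countable hX)
    · simp [hV]
  obtain ⟨S, hSc, huniv, hS⟩ := exists_countable_mem_forall_subset hop Set.univ
  refine ⟨{V ∈ S | IsOpen V ∧ V.Nonempty}, hSc.mono fun V hV => hV.1,
    ⟨Set.univ, huniv, isOpen_univ, univ_nonempty⟩, fun V hV => ⟨hV.2.1, hV.2.2, 𝒬 V, h𝒬 V hV.2.2,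
      fun T hT => ?_⟩⟩
  have hind := (h𝒬 V hV.2.2).prop
  exact ⟨hS V hV.1 ⟨hV.2.2, hT⟩, hind.isOpen_of_mem_finiteTraces hV.2.1 hT, hind.nonempty T hT⟩

theorem exists_isSeparatedPair_of_aleph0_lt_piCharPt [CompactSpace X] [T2Space X] {x : X}
    (hx : ℵ₀ < piCharPt x) {𝒱 : Set (Set X)} (h𝒱 : 𝒱.Countable)
    (hopen : ∀ V ∈ 𝒱, IsOpen V ∧ V.Nonempty) :
    ∃ π, IsSeparatedPair π ∧ x ∈ π true ∧ ∀ V ∈ 𝒱, (V ∩ π false).Nonempty := by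
  obtain ⟨U, hUo, hxU, hU⟩ : ∃ U, IsOpen U ∧ x ∈ U ∧ ∀ V ∈ 𝒱, ¬ V ⊆ U := by
    by_contra! hbase
    exact hx.not_ge (piCharPt_le_aleph0_iff.2 ⟨𝒱, h𝒱, hopen, hbase⟩)
  obtain ⟨O, hO, hxO, hOU⟩ := normal_exists_closure_subset isClosed_singleton hUo
    (singleton_subset_iff.2 hxU)
  obtain ⟨O', hO', hxO', hO'O⟩ := normal_exists_closure_subset isClosed_singleton hO hxO
  have hdisj : Disjoint (closure O') (closure (closure O)ᶜ) :=
    disjoint_compl_right.mono hO'O <|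
      closure_minimal (compl_subset_compl.2 subset_closure) hO.isClosed_compl
  refine ⟨fun b => if b then O' else (closure O)ᶜ, ⟨?_, by simpa using hdisj⟩, by simpa using hxO',
    fun V hV => ?_⟩
  · rintro (_ | _)
    · simp
    · simpa
  · obtain ⟨y, hyV, hy⟩ := not_subset.1 fun h => hU V hV (h.trans hOU)
    exact ⟨y, hyV, by simpa using hy⟩

theorem exists_piCharPt_le_aleph0 [CompactSpace X] [T2Space X] [Nonempty X]
    (hX : ¬ HasUncountableIndependentFamily (Set.univ : Set X)) : ∃ x : X, piCharPt x ≤ ℵ₀ := by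
  by_contra! hno
  obtain ⟨𝒱, h𝒱, hne, hV𝒱⟩ := exists_countable_forall_finiteTraces_subset hX
  choose π hπ hxπ hπfalse using fun x => exists_isSeparatedPair_of_aleph0_lt_piCharPt (hno x) h𝒱
    fun V hV => ⟨(hV𝒱 V hV).1, (hV𝒱 V hV).2.1⟩
  obtain ⟨t, ht⟩ := CompactSpace.elim_nhds_subcover (fun x => π x true)
    fun x => ((hπ x).isOpen true).mem_nhds (hxπ x)
  obtain ⟨V, hV, x, hVx⟩ := exists_forall_subset_inter_nonempty_of_finset_cover hne
    (fun V hV => (hV𝒱 V hV).2.1) ht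
  obtain ⟨-, -, 𝒬, hmax, htraces⟩ := hV𝒱 V hV
  obtain ⟨T, hT, b, hTb⟩ := exists_inter_eq_empty_of_maximal_isIndependentBelow hmax (hπ x)
  have hTV : T ⊆ V := by
    obtain ⟨E, σ, -, rfl⟩ := hT
    exact inter_subset_left
  cases b with
  | true => exact (hVx T (htraces hT) hTV).ne_empty hTb
  | false => exact (hπfalse x T (htraces hT)).ne_empty hTb

end PiBase

section CountableSupport

theorem exists_countable_forall_not_disjoint {δ I : Type*} {F G : δ → Finset I}
    (hFG : ∀ d, F d ⊆ G d) (hF : ∀ d, (F d).Nonempty)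
    (h : ∀ s : Set δ, (s.Pairwise fun d d' => Disjoint (F d) (G d')) → s.Countable) :
    ∃ A : Set I, A.Countable ∧ ∀ d, ¬ Disjoint (F d : Set I) A := by
  -- `s` is a maximal family of coloured indices whose sets `F` are disjoint from each other, and
  -- from the sets `G` of the same colour; only countably many indices occur in it. An index `d`
  -- whose `F d` avoids all `G` on `s` could be adjoined: the finite set `G d` meets `F` for only
  -- finitely many members of `s`, so it leaves a colour free.
  let r : δ × ℕ → δ × ℕ → Prop := fun x y =>
    Disjoint (F x.1) (F y.1) ∧ (x.2 = y.2 → Disjoint (F x.1) (G y.1))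
  obtain ⟨s, hs⟩ := zorn_subset {s : Set (δ × ℕ) | s.Pairwise r} fun c hc hchain =>
    ⟨⋃₀ c, (pairwise_sUnion hchain.directedOn).2 hc, fun t ht => subset_sUnion_of_mem ht⟩
  have hcolour : ∀ n, {d | (d, n) ∈ s}.Countable := fun n => h _ fun d hd d' hd' hne =>
    (hs.prop hd hd' fun heq => hne (congrArg Prod.fst heq)).2 rfl
  have hsc : s.Countable := by
    refine (countable_iUnion fun n => (hcolour n).image fun d => (d, n)).mono fun x hx => ?_
    exact mem_iUnion.2 ⟨x.2, x.1, hx, rfl⟩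
  refine ⟨⋃ x ∈ s, (G x.1 : Set I), hsc.biUnion fun x _ => (G x.1).countable_toSet,
    fun d hd => ?_⟩
  have hdG : ∀ x ∈ s, Disjoint (F d) (G x.1) := fun x hx => by
    rw [← Finset.disjoint_coe]
    exact hd.mono_right (subset_biUnion_of_mem (u := fun x : δ × ℕ => (G x.1 : Set I)) hx)
  obtain ⟨n, hn⟩ : ∃ n, ∀ d', (d', n) ∈ s → Disjoint (F d') (G d) := by
    by_contra! hmeet
    choose e hes he using hmeet
    choose i hie hid using fun n => Finset.not_disjoint_iff.1 (he n)
    refine not_injective_infinite_finite (fun n => (⟨i n, hid n⟩ : G d)) fun n m hnm => ?_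
    by_contra hne
    have hdisj := (hs.prop (hes n) (hes m) fun heq => hne (congrArg Prod.snd heq)).1
    have him : i n = i m := congrArg Subtype.val hnm
    exact Finset.disjoint_left.1 hdisj (hie n) (him ▸ hie m)
  have hins : (insert (d, n) s).Pairwise r := hs.prop.insert fun x hx _ =>
    ⟨⟨(hdG x hx).mono_right (hFG _), fun _ => hdG x hx⟩,
      ((hdG x hx).mono_right (hFG _)).symm, fun hxn => hn x.1 (by rwa [← show x.2 = n from hxn])⟩
  have hmem : (d, n) ∈ s := hs.le_of_ge hins (subset_insert _ _) (mem_insert _ _)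
  obtain ⟨i, hi⟩ := hF d
  exact Finset.disjoint_left.1 (hdG _ hmem) hi (hFG d hi)

/-- A finite modification of the point `p`, by the values of `z` on the finite set `coords`, which
moves `f p` away from itself: prescribing `z` (resp. `p`) on `coords` forces `f` into `U true`
(resp. `U false`), and these sets have disjoint closures. -/
structure Deviation {I X Y : Type*} [TopologicalSpace Y] (f : (I → X) → Y) (p : I → X) where
  z : I → X
  coords : Finset I
  U : Bool → Set Y
  disjoint : Disjoint (closure (U true)) (closure (U false))
  mem_true : ∀ w, EqOn w z coords → f w ∈ U true
  mem_false : ∀ w, EqOn w p coords → f w ∈ U false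

namespace Deviation

variable {I X Y : Type*} [TopologicalSpace Y] {f : (I → X) → Y} {p : I → X}

open scoped Classical in
/-- The coordinates at which a deviation really modifies `p`. -/
noncomputable def support (d : Deviation f p) : Finset I := {i ∈ d.coords | d.z i ≠ p i}

theorem mem_support {d : Deviation f p} {i : I} :
    i ∈ d.support ↔ i ∈ d.coords ∧ d.z i ≠ p i := by
  simp [support]

theorem support_subset_coords (d : Deviation f p) : d.support ⊆ d.coords :=
  fun _ hi => (mem_support.1 hi).1

theorem support_nonempty (d : Deviation f p) : d.support.Nonempty := by
  by_contra hempty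
  have hz : EqOn p d.z d.coords := fun i hi => by
    by_contra hne
    exact hempty ⟨i, mem_support.2 ⟨hi, Ne.symm hne⟩⟩
  exact disjoint_left.1 d.disjoint (subset_closure (d.mem_true p hz))
    (subset_closure (d.mem_false p fun i _ => rfl))

theorem exists_forall_mem {ι : Type*} {d : ι → Deviation f p}
    (hd : Pairwise fun j k => Disjoint (d j).support (d k).coords) (σ : ι → Bool) :
    ∃ w, ∀ j, f w ∈ (d j).U (σ j) := by
  classical
  let w : I → X := fun i =>
    if h : ∃ j, σ j = true ∧ i ∈ (d j).support then (d h.choose).z i else p i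
  have huniq : ∀ {j k i}, i ∈ (d j).support → i ∈ (d k).coords → j = k := by
    intro j k i hij hik
    by_contra hne
    exact Finset.disjoint_left.1 (hd hne) hij hik
  refine ⟨w, fun j => ?_⟩
  cases hσ : σ j with
  | true =>
    refine (d j).mem_true w fun i hi => ?_
    by_cases h : ∃ k, σ k = true ∧ i ∈ (d k).support
    · simp only [w, dif_pos h, huniq h.choose_spec.2 hi]
    · have hz : (d j).z i = p i := by
        by_contra hne
        exact h ⟨j, hσ, mem_support.2 ⟨hi, hne⟩⟩
      simp only [w, dif_neg h, hz]
  | false =>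
    refine (d j).mem_false w fun i hi => dif_neg ?_
    rintro ⟨k, hk, hik⟩
    rw [huniq hik hi, hσ] at hk
    exact Bool.false_ne_true hk

theorem countable_of_pairwise_disjoint [CompactSpace Y]
    (hY : ¬ HasUncountableIndependentFamily (Set.univ : Set Y)) {s : Set (Deviation f p)}
    (hs : s.Pairwise fun d d' => Disjoint d.support d'.coords) : s.Countable := by
  by_contra hunc
  have : Uncountable s := by rwa [← not_countable_iff, countable_coe_iff]
  refine hY (hasUncountableIndependentFamily_univ_of_finset (fun d : s => d.1.disjoint)
    fun E σ => ?_)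
  obtain ⟨w, hw⟩ := exists_forall_mem (d := fun d : s => d.1)
    (fun d d' hne => hs d.2 d'.2 fun h => hne (Subtype.ext h)) σ
  exact ⟨f w, mem_iInter₂.2 fun d _ => hw d⟩

end Deviation

variable {I X Y : Type*} [TopologicalSpace X] [TopologicalSpace Y] {f : (I → X) → Y}

theorem exists_finset_forall_eqOn_mem (hf : Continuous f) {w : I → X} {U : Set Y} (hU : IsOpen U)
    (hw : f w ∈ U) : ∃ G : Finset I, ∀ w', EqOn w' w G → f w' ∈ U := by
  obtain ⟨G, u, hu, hGu⟩ := isOpen_pi_iff.1 (hU.preimage hf) w hw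
  exact ⟨G, fun w' hw' => hGu fun i hi => hw' hi ▸ (hu i hi).2⟩

theorem exists_deviation_disjoint_support [T25Space Y] (hf : Continuous f) {p w : I → X}
    {A : Set I} (hw : EqOn w p A) (hne : f w ≠ f p) :
    ∃ d : Deviation f p, Disjoint (d.support : Set I) A := by
  classical
  obtain ⟨U, hwU, hU, V, hpV, hV, hUV⟩ := exists_open_nhds_disjoint_closure hne
  obtain ⟨G₁, hG₁⟩ := exists_finset_forall_eqOn_mem hf hU hwU
  obtain ⟨G₂, hG₂⟩ := exists_finset_forall_eqOn_mem hf hV hpV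
  refine ⟨⟨w, G₁ ∪ G₂, fun b => if b then U else V, by simpa using hUV, fun w' hw' => ?_,
    fun w' hw' => ?_⟩, disjoint_left.2 fun i hi hiA => (Deviation.mem_support.1 hi).2 (hw hiA)⟩
  · simpa using hG₁ w' (hw'.mono (by simp))
  · simpa using hG₂ w' (hw'.mono (by simp))

theorem exists_countable_forall_eqOn_eq [CompactSpace Y] [T2Space Y]
    (hY : ¬ HasUncountableIndependentFamily (Set.univ : Set Y)) (hf : Continuous f) (p : I → X) :
    ∃ A : Set I, A.Countable ∧ ∀ w, EqOn w p A → f w = f p := by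
  obtain ⟨A, hA, hmeet⟩ := exists_countable_forall_not_disjoint
    (F := fun d : Deviation f p => d.support) Deviation.support_subset_coords
    Deviation.support_nonempty fun s hs => Deviation.countable_of_pairwise_disjoint hY hs
  refine ⟨A, hA, fun w hw => ?_⟩
  by_contra hne
  obtain ⟨d, hd⟩ := exists_deviation_disjoint_support hf hw hne
  exact hmeet d hd

theorem exists_forall_lt_mem_of_forall_eq [CompactSpace X] [T2Space X] (hf : Continuous f)
    {a : ℕ → I} {p : X} {y : Y} (h : ∀ w, (∀ n, w (a n) = p) → f w = y) {U : Set Y}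
    (hU : IsOpen U) (hy : y ∈ U) :
    ∃ N : ℕ, ∃ O, IsOpen O ∧ p ∈ O ∧ ∀ w, (∀ n < N, w (a n) ∈ O) → f w ∈ U := by
  let g : (I → X) → ℕ → X := fun w n => w (a n)
  have hg : IsClosedMap g := Continuous.isClosedMap (by fun_prop)
  have hfib : ∀ᶠ v in nhds fun _ => p, ∀ w ∈ g ⁻¹' {v}, f w ∈ U :=
    hg.eventually_nhds_fiber _ fun w hw => (hU.preimage hf).mem_nhds <| by
      rwa [mem_preimage, h w (congrFun hw)]
  obtain ⟨V, hVU, hV, hpV⟩ := eventually_nhds_iff.1 hfib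
  obtain ⟨J, u, hu, hJV⟩ := isOpen_pi_iff.1 hV _ hpV
  refine ⟨J.sup id + 1, ⋂ n ∈ J, u n, isOpen_biInter_finset fun n hn => (hu n hn).1,
    mem_iInter₂.2 fun n hn => (hu n hn).2, fun w hw => hVU (g w) (hJV fun n hn => ?_) w rfl⟩
  exact mem_iInter₂.1 (hw n (Nat.lt_succ_of_le (Finset.le_sup (f := id) hn))) n hn

end CountableSupport

section CoherentPiBase

variable {X : Type u} [TopologicalSpace X]

/-- Local π-bases `P x` at all points `x`, with a common index set, such that neighbourhoods of any
two points can be refined by members of the same index. -/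
structure IsCoherentPiBase {κ : Type*} (P : X → κ → Set X) : Prop where
  isOpen : ∀ x k, IsOpen (P x k)
  nonempty : ∀ x k, (P x k).Nonempty
  exists_subset : ∀ {x y : X} {U V : Set X}, IsOpen U → IsOpen V → x ∈ U → y ∈ V →
    ∃ k, P x k ⊆ U ∧ P y k ⊆ V

theorem PowerHomogeneous.exists_isOpenMap_forall_eq [CompactSpace X] [T2Space X]
    (hph : PowerHomogeneous X) (hX : ¬ HasUncountableIndependentFamily (Set.univ : Set X))
    (p : X) : ∃ I : Type u, ∀ x : X, ∃ (f : (I → X) → X) (a : ℕ → I),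
      Continuous f ∧ IsOpenMap f ∧ ∀ w, (∀ n, w (a n) = p) → f w = x := by
  obtain ⟨I, ⟨i₀⟩, hhom⟩ := hph
  refine ⟨I, fun x => ?_⟩
  obtain ⟨h, hh⟩ := hhom (fun _ => p) fun _ => x
  have hcont : Continuous fun w => h w i₀ := (continuous_apply i₀).comp h.continuous
  obtain ⟨A, hA, hAx⟩ := exists_countable_forall_eqOn_eq hX hcont fun _ => p
  obtain ⟨a, ha⟩ := (hA.insert i₀).exists_eq_range (insert_nonempty _ _)
  refine ⟨_, a, hcont, (isOpenMap_eval i₀).comp h.isOpenMap, fun w hw => ?_⟩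
  refine (hAx w fun i hi => ?_).trans (congrFun hh i₀)
  obtain ⟨n, rfl⟩ := ha.le (mem_insert_of_mem _ hi)
  exact hw n

theorem exists_isCoherentPiBase_of_forall_eq [CompactSpace X] [T2Space X] {I : Type*} {p : X}
    {ℬ : Set (Set X)} (hℬ : ∀ B ∈ ℬ, IsOpen B ∧ B.Nonempty)
    (hp : ∀ U, IsOpen U → p ∈ U → ∃ B ∈ ℬ, B ⊆ U) {f : X → (I → X) → X} {a : X → ℕ → I}
    (hf : ∀ x, Continuous (f x)) (hfo : ∀ x, IsOpenMap (f x))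
    (ha : ∀ x w, (∀ n, w (a x n) = p) → f x w = x) :
    IsCoherentPiBase fun x (k : ℕ × ℬ) => f x '' {w | ∀ n < k.1, w (a x n) ∈ (k.2 : Set X)} where
  isOpen x k := by
    refine hfo x _ ?_
    have hset : {w : I → X | ∀ n < k.1, w (a x n) ∈ (k.2 : Set X)} =
        ⋂ n ∈ Finset.range k.1, (fun w : I → X => w (a x n)) ⁻¹' k.2 := by
      ext w; simp
    rw [hset]
    exact isOpen_biInter_finset fun n _ => (hℬ _ k.2.2).1.preimage (continuous_apply _)
  nonempty x k := by
    obtain ⟨v, hv⟩ := (hℬ _ k.2.2).2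
    exact ⟨_, fun _ => v, fun _ _ => hv, rfl⟩
  exists_subset {x y U V} hU hV hx hy := by
    obtain ⟨N, O, hO, hpO, hN⟩ := exists_forall_lt_mem_of_forall_eq (hf x) (ha x) hU hx
    obtain ⟨M, O', hO', hpO', hM⟩ := exists_forall_lt_mem_of_forall_eq (hf y) (ha y) hV hy
    obtain ⟨B, hB, hBO⟩ := hp (O ∩ O') (hO.inter hO') ⟨hpO, hpO'⟩
    refine ⟨(max N M, ⟨B, hB⟩), ?_, ?_⟩
    · rintro _ ⟨w, hw, rfl⟩
      exact hN w fun n hn => (hBO (hw n (lt_max_of_lt_left hn))).1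
    · rintro _ ⟨w, hw, rfl⟩
      exact hM w fun n hn => (hBO (hw n (lt_max_of_lt_right hn))).2

theorem PowerHomogeneous.exists_isCoherentPiBase [CompactSpace X] [T2Space X] [Nonempty X]
    (hph : PowerHomogeneous X) (hX : ¬ HasUncountableIndependentFamily (Set.univ : Set X)) :
    ∃ (κ : Type u) (P : X → κ → Set X), Countable κ ∧ IsCoherentPiBase P := by
  obtain ⟨p, hp⟩ := exists_piCharPt_le_aleph0 hX
  obtain ⟨ℬ, hℬc, hℬ, hpℬ⟩ := piCharPt_le_aleph0_iff.1 hp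
  obtain ⟨I, hI⟩ := hph.exists_isOpenMap_forall_eq hX p
  choose f a hf hfo ha using hI
  have := hℬc.to_subtype
  exact ⟨ℕ × ℬ, _, inferInstance, exists_isCoherentPiBase_of_forall_eq hℬ hpℬ hf hfo ha⟩

namespace IsCoherentPiBase

variable {κ : Type u} [Countable κ] {P : X → κ → Set X}

theorem piCharPt_le_aleph0 (hP : IsCoherentPiBase P) (x : X) : piCharPt x ≤ ℵ₀ := by
  refine piCharPt_le_aleph0_iff.2 ⟨range (P x), countable_range _,
    forall_mem_range.2 fun k => ⟨hP.isOpen x k, hP.nonempty x k⟩, fun U hU hx => ?_⟩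
  obtain ⟨k, hk, -⟩ := hP.exists_subset hU hU hx hx
  exact ⟨P x k, mem_range_self k, hk⟩

theorem mk_le_continuum [T2Space X] (hP : IsCoherentPiBase P) {Y : Set X} (hY : Dense Y)
    (hYc : #Y ≤ 𝔠) : #X ≤ 𝔠 := by
  choose d hdP hdY using fun x k => hY.inter_open_nonempty _ (hP.isOpen x k) (hP.nonempty x k)
  have hinj : Function.Injective fun (x : X) (k : κ) => (⟨d x k, hdY x k⟩ : Y) := by
    intro x y hxy
    by_contra hne
    obtain ⟨U, V, hU, hV, hxU, hyV, hUV⟩ := t2_separation hne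
    obtain ⟨k, hkU, hkV⟩ := hP.exists_subset hU hV hxU hyV
    have hdk : d x k = d y k := congrArg Subtype.val (congrFun hxy k)
    exact disjoint_left.1 hUV (hkU (hdP x k)) (hdk ▸ hkV (hdP y k))
  exact (mk_le_of_injective hinj).trans (mk_arrow_le_continuum hYc)

end IsCoherentPiBase

theorem exists_countable_forall_mem_closure_inter {𝒞 : Set (Set X)} (h𝒞 : 𝒞.Countable)
    (hd : ∀ C ∈ 𝒞, Dense C) {x : X} (hx : piCharPt x ≤ ℵ₀) :
    ∃ E : Set X, E.Countable ∧ ∀ C ∈ 𝒞, x ∈ closure (E ∩ C) := by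
  obtain ⟨ℬ, hℬc, hℬ, hxℬ⟩ := piCharPt_le_aleph0_iff.1 hx
  choose d hdB hdC using fun (B : ℬ) (C : 𝒞) =>
    (hd C C.2).inter_open_nonempty _ (hℬ B B.2).1 (hℬ B B.2).2
  have := h𝒞.to_subtype
  have := hℬc.to_subtype
  refine ⟨range fun q : ℬ × 𝒞 => d q.1 q.2, countable_range _, fun C hC =>
    mem_closure_iff.2 fun U hU hxU => ?_⟩
  obtain ⟨B, hB, hBU⟩ := hxℬ U hU hxU
  exact ⟨d ⟨B, hB⟩ ⟨C, hC⟩, hBU (hdB ⟨B, hB⟩ ⟨C, hC⟩), ⟨(⟨B, hB⟩, ⟨C, hC⟩), rfl⟩,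
    hdC ⟨B, hB⟩ ⟨C, hC⟩⟩

theorem exists_countable_saturated {𝒞 : Set (Set X)} (h𝒞 : 𝒞.Countable)
    (hd : ∀ C ∈ 𝒞, Dense C) (hπ : ∀ x : X, piCharPt x ≤ ℵ₀) (x : X) :
    ∃ S : Set X, x ∈ S ∧ S.Countable ∧ Saturated 𝒞 S := by
  choose E hEc hE using fun y => exists_countable_forall_mem_closure_inter h𝒞 hd (hπ y)
  obtain ⟨S, hSc, hxS, hS⟩ := exists_countable_mem_forall_subset hEc x
  exact ⟨S, hxS, hSc, fun C hC y hy =>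
    closure_mono (inter_subset_inter_left C (hS y hy)) (hE y C hC)⟩

end CoherentPiBase

section SubseparableGδ

variable {X : Type u} [TopologicalSpace X]

theorem exists_isGδ_subset_disjoint [NormalSpace X] [T1Space X] {M T : Set X} (hM : IsClosed M)
    (hMG : IsGδ M) (hT : IsClosed T) {x : X} (hxM : x ∈ M) (hxT : x ∉ T) :
    ∃ K ⊆ M, IsClosed K ∧ IsGδ K ∧ x ∈ K ∧ Disjoint K T := by
  obtain ⟨g, hg0, hg1, -⟩ := exists_continuous_zero_one_of_isClosed hT isClosed_singleton
    (disjoint_singleton_right.2 hxT)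
  refine ⟨M ∩ g ⁻¹' {1}, inter_subset_left, hM.inter (isClosed_singleton.preimage g.continuous),
    hMG.inter ((IsGδ.singleton 1).preimage g.continuous), ⟨hxM, hg1 rfl⟩, ?_⟩
  rw [disjoint_left]
  rintro y ⟨-, hy1⟩ hy
  exact zero_ne_one ((hg0 hy).symm.trans hy1)

theorem nonempty_iInter_of_antitone [CompactSpace X] [Nonempty X] {ι : Type*} [LinearOrder ι]
    {K : ι → Set X} (hK : ∀ i, IsClosed (K i)) (hne : ∀ i, (K i).Nonempty) (hanti : Antitone K) :
    (⋂ i, K i).Nonempty := by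
  refine CompactSpace.iInter_nonempty hK fun E => ?_
  obtain rfl | hE := E.eq_empty_or_nonempty
  · simp
  · obtain ⟨x, hx⟩ := hne (E.max' hE)
    exact ⟨x, mem_iInter₂.2 fun i hi => hanti (E.le_max' i hi) hx⟩

theorem exists_antitone_isClosed_disjoint_of_forall_not_subseparable [CompactSpace X] [T2Space X]
    [Nonempty X] (hno : ∀ K : Set X, K.Nonempty → IsClosed K → IsGδ K → ¬ Subseparable K)
    {S : X → Set X} (hS : ∀ x, (S x).Countable) :
    ∃ (x : CountableOrdinal → X) (K : CountableOrdinal → Set X), Antitone K ∧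
      ∀ a, IsClosed (K a) ∧ x a ∈ K a ∧ Disjoint (K a) (closure (⋃ b ∈ Iio a, S (x b))) := by
  obtain ⟨F, hF⟩ := exists_forall_image_Iio (ι := CountableOrdinal)
    (fun (𝒮 : Set (X × Set X)) q => ((∀ r ∈ 𝒮, q.2 ⊆ r.2) ∧ IsClosed q.2 ∧ IsGδ q.2 ∧ q.1 ∈ q.2 ∧
      Disjoint q.2 (closure (⋃ r ∈ 𝒮, S r.1)))) fun F a ih => by
    have hcount := CountableOrdinal.countable_Iio a
    have := hcount.to_subtype
    have hMc : IsClosed (⋂ b : Iio a, (F b).2) := isClosed_iInter fun b => (ih b b.2).2.1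
    have hMG : IsGδ (⋂ b : Iio a, (F b).2) := .iInter fun b => (ih b b.2).2.2.1
    have hMne : (⋂ b : Iio a, (F b).2).Nonempty :=
      nonempty_iInter_of_antitone (fun b => (ih b b.2).2.1) (fun b => ⟨_, (ih b b.2).2.2.2.1⟩) <|
        antitone_iff_forall_lt.2 fun _ b hb => (ih b b.2).1 _ (mem_image_of_mem F hb)
    obtain ⟨k, hkM, hk⟩ : ∃ k ∈ ⋂ b : Iio a, (F b).2, k ∉ closure (⋃ r ∈ F '' Iio a, S r.1) :=
      not_subset.1 fun hsub => hno _ hMne hMc hMG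
        ⟨_, (hcount.image F).biUnion fun r _ => hS r.1, hsub⟩
    obtain ⟨K, hKM, hK⟩ := exists_isGδ_subset_disjoint hMc hMG isClosed_closure hkM hk
    refine ⟨(k, K), forall_mem_image.2 fun b hb => ?_, hK⟩
    exact hKM.trans (iInter_subset (fun b : Iio a => (F b).2) ⟨b, hb⟩)
  refine ⟨fun a => (F a).1, fun a => (F a).2, antitone_iff_forall_lt.2 fun _ a hb =>
    (hF a).1 _ (mem_image_of_mem F hb), fun a => ?_⟩
  obtain ⟨-, hc, -, hx, hdisj⟩ := hF a
  rw [biUnion_image] at hdisj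
  exact ⟨hc, hx, hdisj⟩

theorem exists_isGδ_subseparable [CompactSpace X] [T2Space X] [Nonempty X] {𝒞 : Set (Set X)}
    (hcov : ⋃₀ 𝒞 = Set.univ) (ht : ∀ C ∈ 𝒞, tightness ↥C ≤ ℵ₀)
    (hsat : ∀ x : X, ∃ S : Set X, x ∈ S ∧ S.Countable ∧ Saturated 𝒞 S) :
    ∃ K : Set X, K.Nonempty ∧ IsClosed K ∧ IsGδ K ∧ Subseparable K := by
  by_contra! hno
  choose S hxS hSc hS using hsat
  obtain ⟨x, K, hanti, hK⟩ := exists_antitone_isClosed_disjoint_of_forall_not_subseparable hno hSc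
  obtain ⟨z, hz⟩ := exists_forall_isClosed_mem_of_eventually (l := Filter.atTop) x
  have hzS : z ∈ closure (⋃ a, S (x a)) := hz _ isClosed_closure <| .of_forall fun a =>
    subset_closure (mem_iUnion_of_mem a (hxS (x a)))
  have hsat : Saturated 𝒞 (⋃ a, S (x a)) := by
    simpa using Saturated.biUnion (s := Set.univ) fun a _ => hS (x a)
  obtain ⟨B, hBS, hBc, hzB⟩ := hsat.exists_countable_mem_closure hcov ht hzS
  obtain ⟨a, ha⟩ := CountableOrdinal.exists_subset_biUnion_Iio hBc hBS
  have hzK : z ∈ K a := hz _ (hK a).1 <| by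
    filter_upwards [Filter.eventually_ge_atTop a] with b hb using hanti hb (hK b).2.1
  exact disjoint_left.1 (hK a).2.2 hzK (closure_mono ha hzB)

end SubseparableGδ

section Transport

section FiniteModification

variable {I X Y : Type*}

/-- The points of `I → X` obtained from `q` by changing finitely many coordinates, all of them
in `S`, to values in `D`. -/
def finiteModifications (q : I → X) (D : Set X) (S : Set I) : Set (I → X) :=
  {p | ∃ G : Finset I, (G : Set I) ⊆ S ∧ (∀ i ∈ G, p i ∈ D) ∧ ∀ i ∉ G, p i = q i}

theorem countable_setOf_forall_mem_forall_notMem_eq (q : I → X) {D : Set X} (hD : D.Countable)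
    (G : Finset I) : {p : I → X | (∀ i ∈ G, p i ∈ D) ∧ ∀ i ∉ G, p i = q i}.Countable := by
  have := hD.to_subtype
  refine (countable_range fun (u : G → D) i => open Classical in
    if hi : i ∈ G then (u ⟨i, hi⟩ : X) else q i).mono fun p hp => ?_
  refine ⟨fun i => ⟨p i, hp.1 i i.2⟩, funext fun i => ?_⟩
  by_cases hi : i ∈ G
  · simp [hi]
  · simp [hi, hp.2 i hi]

theorem finiteModifications_eq_biUnion (q : I → X) (D : Set X) (S : Set I) :
    finiteModifications q D S = ⋃ G ∈ {G : Finset I | (G : Set I) ⊆ S},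
      {p | (∀ i ∈ G, p i ∈ D) ∧ ∀ i ∉ G, p i = q i} := by
  ext p
  simp only [finiteModifications, mem_iUnion₂, mem_ofPred_eq, exists_prop]

theorem countable_finiteModifications (q : I → X) {D : Set X} (hD : D.Countable) {S : Set I}
    (hS : S.Countable) : (finiteModifications q D S).Countable := by
  rw [finiteModifications_eq_biUnion]
  exact (countable_setOf_finset_subset hS).biUnion fun G _ =>
    countable_setOf_forall_mem_forall_notMem_eq q hD G

theorem exists_countable_forall_finiteModifications_subset (q : I → X) {D : Set X}
    (hD : D.Countable) {A : (I → X) → Set I} (hA : ∀ p, (A p).Countable) :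
    ∃ S : Set I, S.Countable ∧ ∀ p ∈ finiteModifications q D S, A p ⊆ S := by
  obtain ⟨S, hSc, -, hS⟩ := exists_countable_superset_forall_finset
    (op := fun G => ⋃ p ∈ {p | (∀ i ∈ G, p i ∈ D) ∧ ∀ i ∉ G, p i = q i}, A p)
    (fun G => (countable_setOf_forall_mem_forall_notMem_eq q hD G).biUnion fun p _ => hA p)
    countable_empty
  refine ⟨S, hSc, fun p ⟨G, hGS, hp⟩ => ?_⟩
  exact (subset_biUnion_of_mem (u := A) hp).trans (hS G hGS)

theorem mem_closure_image_finiteModifications [TopologicalSpace X] [TopologicalSpace Y]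
    {f : (I → X) → Y} (hf : Continuous f) {q : I → X} {D : Set X} {S : Set I}
    (hS : ∀ p ∈ finiteModifications q D S, ∀ w, EqOn w p S → f w = f p) {w : I → X}
    (hw : ∀ i ∈ S, w i ∈ closure D) : f w ∈ closure (f '' finiteModifications q D S) := by
  classical
  refine mem_closure_iff.2 fun U hU hwU => ?_
  obtain ⟨G, O, hO, hGU⟩ := isOpen_pi_iff.1 (hU.preimage hf) w hwU
  have hd : ∀ i ∈ S, i ∈ G → ∃ d ∈ D, d ∈ O i := fun i hiS hiG => by
    obtain ⟨d, hdO, hdD⟩ := mem_closure_iff.1 (hw i hiS) _ (hO i hiG).1 (hO i hiG).2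
    exact ⟨d, hdD, hdO⟩
  choose d hdD hdO using hd
  let p : I → X := fun i => if hi : i ∈ S ∧ i ∈ G then d i hi.1 hi.2 else q i
  have hp : p ∈ finiteModifications q D S := by
    refine ⟨{i ∈ G | i ∈ S}, fun i hi => (Finset.mem_filter.1 hi).2, fun i hi => ?_, fun i hi => ?_⟩
    · obtain ⟨hiG, hiS⟩ := Finset.mem_filter.1 hi
      simpa [p, hiG, hiS] using hdD i hiS hiG
    · exact dif_neg fun h => hi (Finset.mem_filter.2 h.symm)
  have hpw : f (S.piecewise p w) = f p := hS p hp _ (piecewise_eqOn S p w)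
  refine ⟨f p, ?_, mem_image_of_mem f hp⟩
  rw [← hpw]
  refine hGU fun i hiG => ?_
  by_cases hiS : i ∈ S
  · simpa [p, hiS, Finset.mem_coe.1 hiG] using hdO i hiS hiG
  · simpa [hiS] using (hO i hiG).2

theorem exists_countable_subseparable_image [Nonempty X] [TopologicalSpace X]
    {Y : Type u} [TopologicalSpace Y] [CompactSpace Y] [T2Space Y]
    (hY : ¬ HasUncountableIndependentFamily (Set.univ : Set Y)) {f : (I → X) → Y}
    (hf : Continuous f) {D : Set X} (hD : D.Countable) :
    ∃ S : Set I, S.Countable ∧ Subseparable (f '' {w | ∀ i ∈ S, w i ∈ closure D}) := by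
  let q : I → X := fun _ => Classical.arbitrary X
  choose A hAc hA using exists_countable_forall_eqOn_eq hY hf
  obtain ⟨S, hSc, hS⟩ := exists_countable_forall_finiteModifications_subset q hD hAc
  refine ⟨S, hSc, _, (countable_finiteModifications q hD hSc).image f, image_subset_iff.2 ?_⟩
  exact fun w hw => mem_closure_image_finiteModifications hf
    (fun p hp w' hw' => hA p w' (hw'.mono (hS p hp))) hw

end FiniteModification

theorem PowerHomogeneous.exists_isGδ_subseparable_mem {X : Type u} [TopologicalSpace X]
    [CompactSpace X] [T2Space X] (hph : PowerHomogeneous X)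
    (hX : ¬ HasUncountableIndependentFamily (Set.univ : Set X)) {K : Set X}
    (hKne : K.Nonempty) (hK : IsClosed K) (hKG : IsGδ K) (hKs : Subseparable K) (x : X) :
    ∃ L : Set X, x ∈ L ∧ IsClosed L ∧ IsGδ L ∧ Subseparable L := by
  classical
  obtain ⟨I, ⟨i₀⟩, hhom⟩ := hph
  obtain ⟨q, hq⟩ := hKne
  obtain ⟨D, hD, hKD⟩ := hKs
  obtain ⟨h, hh⟩ := hhom (fun _ => q) fun _ => x
  have : Nonempty X := ⟨x⟩
  obtain ⟨S, hSc, E, hE, hSE⟩ := exists_countable_subseparable_image hX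
    ((continuous_apply i₀).comp h.continuous) hD
  let g : X → I → X := fun y => h.symm (Function.update (fun _ => x) i₀ y)
  have hg : ∀ i, Continuous fun y => g y i := fun i => (continuous_apply i).comp <|
    h.symm.continuous.comp <| continuous_const.update i₀ continuous_id
  have hgx : g x = fun _ => q := by
    rw [h.symm_apply_eq, hh, Function.update_eq_self i₀ fun _ => x]
  have hgy : ∀ y, h (g y) i₀ = y := fun y => by simp [g]
  have := hSc.to_subtype
  refine ⟨⋂ i : S, (fun y => g y i) ⁻¹' K, mem_iInter.2 fun i => ?_,
    isClosed_iInter fun i => hK.preimage (hg i), .iInter fun i => hKG.preimage (hg i), E, hE,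
    fun y hy => hSE ⟨g y, fun i hi => hKD (mem_iInter.1 hy ⟨i, hi⟩), hgy y⟩⟩
  rwa [mem_preimage, hgx]

end Transport

section Density

variable {X : Type u}

-- Closing off under `pt` makes finite subfamilies of `O` with indices in `Y` cover the whole space
-- as soon as they cover `Y`.
theorem exists_mk_le_continuum_forall_finset_cover [Nonempty X] {ι : Type*} [Countable ι]
    {E : X → Set X}
    (hE : ∀ x, (E x).Countable) {R : Set X → Set X} (hR : ∀ B, B.Countable → #(R B) ≤ 𝔠)
    (O : X → ι → Set X) : ∃ Y : Set X, #Y ≤ 𝔠 ∧ (∀ y ∈ Y, E y ⊆ Y) ∧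
      (∀ B ⊆ Y, B.Countable → R B ⊆ Y) ∧
      ∀ G : Finset (X × ι), (G : Set (X × ι)) ⊆ Y ×ˢ Set.univ →
        Y ⊆ ⋃ k ∈ G, O k.1 k.2 → ⋃ k ∈ G, O k.1 k.2 = Set.univ := by
  have hpt : ∀ G : Finset (X × ι), ∃ z, z ∈ ⋃ k ∈ G, O k.1 k.2 →
      ⋃ k ∈ G, O k.1 k.2 = Set.univ := fun G => by
    by_contra! h
    exact (h (Classical.arbitrary X)).2 (eq_univ_of_forall fun z => (h z).1)
  choose pt hpt using hpt
  let φ : Set X → Set X := fun B =>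
    (⋃ y ∈ B, E y) ∪ pt '' {G | (G : Set (X × ι)) ⊆ B ×ˢ Set.univ} ∪ R B
  have hφ : ∀ B, B.Countable → #(φ B) ≤ 𝔠 := fun B hB =>
    have hcount : ((⋃ y ∈ B, E y) ∪ pt '' {G | (G : Set (X × ι)) ⊆ B ×ˢ Set.univ}).Countable :=
      (hB.biUnion fun y _ => hE y).union
        ((countable_setOf_finset_subset (hB.prod countable_univ)).image pt)
    (mk_union_le _ _).trans <|
      (add_le_add (mk_le_continuum_of_countable hcount) (hR B hB)).trans_eq continuum_add_self
  obtain ⟨Y, hYc, hY⟩ := exists_mk_le_continuum_forall_countable_subset hφ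
  refine ⟨Y, hYc, fun y hy z hz => ?_, fun B hBY hB => subset_union_right.trans (hY B hBY hB),
    fun G hGY hYG => hpt G (hYG ?_)⟩
  · exact hY {y} (singleton_subset_iff.2 hy) (countable_singleton y)
      (.inl (.inl (mem_biUnion rfl hz)))
  · refine hY (Prod.fst '' (G : Set (X × ι))) (image_subset_iff.2 fun k hk => (hGY hk).1)
      (G.countable_toSet.image _) (.inl (.inr ⟨G, fun k hk => ?_, rfl⟩))
    exact ⟨mem_image_of_mem _ hk, mem_univ _⟩

variable [TopologicalSpace X]

theorem exists_isOpen_iInter_closure_subset [NormalSpace X] {L : Set X} (hL : IsClosed L)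
    (hLG : IsGδ L) : ∃ O : ℕ → Set X, (∀ n, IsOpen (O n)) ∧ (∀ n, L ⊆ O n) ∧
      ⋂ n, closure (O n) ⊆ L := by
  obtain ⟨U, hU, rfl⟩ := isGδ_iff_eq_iInter_nat.1 hLG
  choose O hO hLO hOU using fun n => normal_exists_closure_subset hL (hU n) (iInter_subset U n)
  exact ⟨O, hO, hLO, iInter_mono hOU⟩

-- A point `z` of `closure B` lies in `⋂ n, closure (O y n)` as soon as `y` and `z` have the same
-- code, where the code of `y` is the sequence of traces `O y n ∩ B`.
theorem exists_mk_le_continuum_closure_subset {O : X → ℕ → Set X} (hO : ∀ x n, IsOpen (O x n))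
    (hxO : ∀ x n, x ∈ O x n) {B : Set X} (hB : B.Countable) :
    ∃ R : Set X, #R ≤ 𝔠 ∧ closure B ⊆ ⋃ y ∈ R, ⋂ n, closure (O y n) := by
  let code : X → ℕ → Set B := fun y n => Subtype.val ⁻¹' O y n
  have hcodes : #(ℕ → Set B) ≤ 𝔠 := mk_arrow_le_continuum <| by
    rw [mk_set, ← two_power_aleph0]
    exact power_le_power_left two_ne_zero hB.le_aleph0
  refine ⟨range (rangeSplitting code), mk_range_le.trans ((mk_set_le _).trans hcodes),
    fun z hz => mem_biUnion (mem_range_self (rangeFactorization code z)) (mem_iInter.2 fun n => ?_)⟩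
  have hcode : code (rangeSplitting code (rangeFactorization code z)) = code z :=
    apply_rangeSplitting code _
  refine closure_mono (fun b hb => ?_) ((hO z n).inter_closure ⟨hxO z n, hz⟩)
  exact (congrFun hcode n).ge (show (⟨b, hb.2⟩ : B) ∈ code z n from hb.1)

theorem dense_of_forall_finset_cover [CompactSpace X] {ι : Type*} {L : X → Set X}
    {O : X → ι → Set X} {Y : Set X} (hO : ∀ x i, IsOpen (O x i)) (hLO : ∀ x i, L x ⊆ O x i)
    (hOL : ∀ x, ⋂ i, O x i ⊆ L x) (hLY : ∀ y ∈ Y, L y ⊆ closure Y)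
    (hYL : closure Y ⊆ ⋃ y ∈ Y, L y)
    (hfin : ∀ G : Finset (X × ι), (G : Set (X × ι)) ⊆ Y ×ˢ Set.univ →
      Y ⊆ ⋃ k ∈ G, O k.1 k.2 → ⋃ k ∈ G, O k.1 k.2 = Set.univ) : Dense Y := by
  intro q
  by_contra hq
  have hcover : closure Y ⊆ ⋃ k ∈ {k : X × ι | k.1 ∈ Y ∧ q ∉ O k.1 k.2}, O k.1 k.2 := by
    intro z hz
    obtain ⟨y, hy, hzy⟩ := mem_iUnion₂.1 (hYL hz)
    obtain ⟨i, hi⟩ : ∃ i, q ∉ O y i := by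
      by_contra! hqO
      exact hq (hLY y hy (hOL y (mem_iInter.2 hqO)))
    exact mem_biUnion (x := (y, i)) ⟨hy, hi⟩ (hLO y i hzy)
  obtain ⟨G, hG, hGf, hYG⟩ := isClosed_closure.isCompact.elim_finite_subcover_image
    (fun k _ => hO k.1 k.2) hcover
  lift G to Finset (X × ι) using hGf
  have huniv : ⋃ k ∈ G, O k.1 k.2 = Set.univ :=
    hfin G (fun k hk => ⟨(hG hk).1, mem_univ _⟩) (subset_closure.trans hYG)
  obtain ⟨k, hk, hqk⟩ := mem_iUnion₂.1 (huniv.ge (mem_univ q))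
  exact (hG hk).2 hqk

theorem exists_dense_mk_le_continuum [CompactSpace X] [T2Space X] [Nonempty X] {𝒞 : Set (Set X)}
    (hcov : ⋃₀ 𝒞 = Set.univ) (ht : ∀ C ∈ 𝒞, tightness ↥C ≤ ℵ₀)
    (hsat : ∀ x : X, ∃ S : Set X, x ∈ S ∧ S.Countable ∧ Saturated 𝒞 S)
    (hL : ∀ x : X, ∃ L : Set X, x ∈ L ∧ IsClosed L ∧ IsGδ L ∧ Subseparable L) :
    ∃ Y : Set X, Dense Y ∧ #Y ≤ 𝔠 := by
  choose S hxS hSc hS using hsat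
  choose L hxL hLc hLG D hDc hLD using hL
  choose O hO hLO hOL using fun x => exists_isOpen_iInter_closure_subset (hLc x) (hLG x)
  choose! R hRc hR using fun (B : Set X) (hB : B.Countable) =>
    exists_mk_le_continuum_closure_subset hO (fun x n => hLO x n (hxL x)) hB
  obtain ⟨Y, hYc, hSDY, hRY, hfin⟩ := exists_mk_le_continuum_forall_finset_cover
    (fun x => (hSc x).union (hDc x)) hRc O
  have hSY : ⋃ y ∈ Y, S y = Y := (iUnion₂_subset fun y hy =>
    subset_union_left.trans (hSDY y hy)).antisymm fun y hy => mem_biUnion hy (hxS y)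
  have hYsat : Saturated 𝒞 Y := hSY ▸ Saturated.biUnion fun y _ => hS y
  refine ⟨Y, dense_of_forall_finset_cover hO hLO ?_ ?_ ?_ hfin, hYc⟩
  · exact fun x => (iInter_mono fun n => subset_closure).trans (hOL x)
  · exact fun y hy => (hLD y).trans (closure_mono (subset_union_right.trans (hSDY y hy)))
  · intro z hz
    obtain ⟨B, hBY, hB, hzB⟩ := hYsat.exists_countable_mem_closure hcov ht hz
    obtain ⟨y, hy, hzy⟩ := mem_iUnion₂.1 (hR B hB hzB)
    exact mem_biUnion (hRY B hBY hB hy) (hOL y hzy)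

end Density

/-- Theorem 4.6. -/
theorem stmt17 {X : Type u} [TopologicalSpace X] [CompactSpace X] [T2Space X]
    (hph : PowerHomogeneous X) (𝒞 : Set (Set X)) (hctble : 𝒞.Countable)
    (hcov : ⋃₀ 𝒞 = Set.univ)
    (h : ∀ C ∈ 𝒞, tightness ↥C ≤ ℵ₀ ∧ Dense C) :
    #X ≤ Cardinal.continuum := by
  obtain hempty | hne := isEmpty_or_nonempty X
  · simp
  have ht : ∀ C ∈ 𝒞, tightness ↥C ≤ ℵ₀ := fun C hC => (h C hC).1
  have hX := not_hasUncountableIndependentFamily_univ hctble hcov ht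
  obtain ⟨κ, P, _, hP⟩ := hph.exists_isCoherentPiBase hX
  have hsat := exists_countable_saturated hctble (fun C hC => (h C hC).2) hP.piCharPt_le_aleph0
  obtain ⟨K, hKne, hK, hKG, hKs⟩ := exists_isGδ_subseparable hcov ht hsat
  obtain ⟨Y, hY, hYc⟩ := exists_dense_mk_le_continuum hcov ht hsat
    (hph.exists_isGδ_subseparable_mem hX hKne hK hKG hKs)
  exact hP.mk_le_continuum hY hYc
end
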